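/- arXiv:2103.04304 — 4 statements merged into one kernel-verified Lean document; each statement's English description precedes it below -/
import Mathlib

section
/- For any instance with n agents having additive valuations v_1,…,v_n over a finite set M of indivisible goods and entitlements b_1,…,b_n > 0 summing to 1, there exists an allocation (A_1,…,A_n) of M such that every agent i receives value v_i(A_i) at least the maximum of the following three quantities: (3/5)·APS(b_i, v_i, M); (1/(2−b_i))·TPS(b_i, v_i, M); and the value of her ⌊1/b_i⌋-th highest-valued item in M. -/
open Finset

def IsPartition {ι : Type*} [DecidableEq ι] (M : Finset ι) {n : ℕ} (A : Fin n → Finset ι) : Prop :=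
  (∀ i, A i ⊆ M) ∧ (∀ i j, i ≠ j → Disjoint (A i) (A j)) ∧ ∀ x ∈ M, ∃ i, x ∈ A i

/-- The AnyPrice share (price-based definition): the minimum over all nonnegative
price vectors summing to 1 of the best value of an affordable bundle. -/
noncomputable def APS {ι : Type*} (b : ℝ) (v : Finset ι → ℝ) (M : Finset ι) : ℝ :=
  sInf {t : ℝ | ∃ p : ι → ℝ, (∀ j ∈ M, 0 ≤ p j) ∧ (∑ j ∈ M, p j) = 1 ∧
    t = sSup {u : ℝ | ∃ S, S ⊆ M ∧ (∑ j ∈ S, p j) ≤ b ∧ u = v S}}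

/-- The truncated proportional share of an additive valuation with item values `w`:
the largest `z ≥ 0` with `b * ∑_{j ∈ M} min (w j) z = z`. -/
noncomputable def TPS {ι : Type*} (b : ℝ) (w : ι → ℝ) (M : Finset ι) : ℝ :=
  sSup {z : ℝ | 0 ≤ z ∧ b * ∑ j ∈ M, min (w j) z = z}

/-- The value of the `k`-th highest valued item of `M` (as the best minimum value
over subsets of `M` of cardinality `k`). -/
noncomputable def kthHighest {ι : Type*} (w : ι → ℝ) (M : Finset ι) (k : ℕ) : ℝ :=
  sSup {t : ℝ | ∃ S ⊆ M, S.card = k ∧ ∀ j ∈ S, t ≤ w j}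

/-!
Every agent plays the bidding game: agent `i` starts with budget `b i`, in each round the highest
bidder picks an item and pays her bid. A threshold is guaranteed when it can be secured against
opponents who pool their budgets `1 - b i` and pick items adversarially, so each of the three shares
needs only a strategy for a single agent.

* For the `⌊1 / b⌋`-th highest value, bid the whole budget until one large item is won.
* For the TPS, bid the whole budget while a single item suffices, and then bid half of the budget in
  proportion to value.
* For the APS, scale so that the target is `1`, the budget is `1` and the APS is `5 / 3`. Any item
  prices under which each bundle worth `5 / 3` costs at least `1` then have total at least `1 / b`.
  Bidding `bidPrice` of the most valuable item makes the opponents pay at least these prices, so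
  enough priced items remain for the agent. A second price function, `cappedPrice`, is needed when
  two items leave a small gap and the next item is too expensive to be bid for proportionally.
-/

theorem sSup_mem_of_isClosed_of_pos {A : Set ℝ} (hA : IsClosed A) (hpos : 0 < sSup A) :
    sSup A ∈ A := by
  refine hA.csSup_mem (Set.nonempty_iff_ne_empty.mpr ?_) ?_
  · rintro rfl
    exact hpos.ne' Real.sSup_empty
  · by_contra hbdd
    exact hpos.ne' (Real.sSup_of_not_bddAbove hbdd)

section BiddingGame

variable {ι : Type*}

section Prices

/-- The price of an item of value `y` to an agent with budget `β` who still needs value `δ`: the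
whole budget if the item alone suffices, and its proportional share of half of the budget
otherwise. -/
noncomputable def gapPrice (δ β y : ℝ) : ℝ := if δ ≤ y then β else β * y / (2 * δ)

/-- The bid of the APS strategy on an item of value `y`, where the target and the initial budget
are both scaled to `1`. -/
noncomputable def bidPrice (y : ℝ) : ℝ :=
  if 1 ≤ y then 1 else if 2 / 3 ≤ y then 1 / 2 else 3 / 4 * y

/-- A variant of `bidPrice` which never charges more than `1 / 4` for an item of value below
`1 / 2`, in return for a steeper slope at small items. -/
noncomputable def cappedPrice (y : ℝ) : ℝ :=
  if y < 1 / 2 then min (1 / 4) (3 / 2 * y) else bidPrice y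

theorem gapPrice_le {δ β y : ℝ} (hδ : 0 < δ) (hβ : 0 ≤ β) : gapPrice δ β y ≤ β := by
  unfold gapPrice
  split_ifs with h
  · exact le_rfl
  · rw [div_le_iff₀ (by positivity)]
    nlinarith

theorem bidPrice_of_lt {y : ℝ} (hy : y < 2 / 3) : bidPrice y = 3 / 4 * y := by
  rw [bidPrice, if_neg (by linarith), if_neg (by linarith)]

theorem bidPrice_mono : Monotone bidPrice := by
  intro y z hyz
  unfold bidPrice
  split_ifs <;> linarith

theorem bidPrice_nonneg {y : ℝ} (hy : 0 ≤ y) : 0 ≤ bidPrice y := by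
  unfold bidPrice
  split_ifs <;> linarith

theorem bidPrice_le_one (y : ℝ) : bidPrice y ≤ 1 := by
  unfold bidPrice
  split_ifs <;> linarith

theorem cappedPrice_nonneg {y : ℝ} (hy : 0 ≤ y) : 0 ≤ cappedPrice y := by
  unfold cappedPrice
  split_ifs
  · positivity
  · exact bidPrice_nonneg hy

theorem cappedPrice_le_max (y : ℝ) : cappedPrice y ≤ max (1 / 4) (bidPrice y) := by
  unfold cappedPrice
  split_ifs
  · exact le_max_of_le_left (min_le_left _ _)
  · exact le_max_right _ _

theorem le_bidPrice_add_floor {y : ℝ} (hy : bidPrice y < 1) :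
    y ≤ 4 / 3 * bidPrice y + 1 / 3 * ⌊2 * bidPrice y⌋₊ := by
  unfold bidPrice at hy ⊢
  split_ifs with h₁ h₂
  · simp [h₁] at hy
  · norm_num
    linarith
  · have : (0 : ℝ) ≤ ⌊2 * (3 / 4 * y)⌋₊ := Nat.cast_nonneg _
    linarith

theorem le_cappedPrice_add_floor {y : ℝ} (hy : cappedPrice y < 1) :
    y ≤ 2 / 3 * cappedPrice y + 1 / 3 * ⌊4 * cappedPrice y⌋₊ := by
  unfold cappedPrice bidPrice at *
  split_ifs at * with h₁ h₂ h₃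
  · rcases min_cases (1 / 4 : ℝ) (3 / 2 * y) with ⟨h, -⟩ | ⟨h, -⟩ <;> rw [h]
    · norm_num
      linarith
    · have : (0 : ℝ) ≤ ⌊4 * (3 / 2 * y)⌋₊ := Nat.cast_nonneg _
      linarith
  · exact absurd hy (lt_irrefl 1)
  · norm_num
    linarith
  · have : (1 : ℝ) ≤ ⌊4 * (3 / 4 * y)⌋₊ := by
      exact_mod_cast Nat.le_floor (by push_cast; linarith)
    linarith

theorem cappedPrice_le_gapPrice {δ β y : ℝ} (hy : y < 1 / 2) (hy₀ : 0 ≤ y) (hδ : 0 < δ)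
    (hβ : 1 / 4 ≤ β) (hδβ : 3 * δ ≤ β) : cappedPrice y ≤ gapPrice δ β y := by
  rw [cappedPrice, if_pos hy, gapPrice]
  split_ifs
  · exact (min_le_left _ _).trans hβ
  · refine (min_le_right _ _).trans ?_
    rw [le_div_iff₀ (by positivity)]
    nlinarith

theorem bidPrice_le_gapPrice {δ y : ℝ} (hy : y < 1) (hy₀ : 0 ≤ y) (hδ : 0 < δ)
    (hδ' : δ ≤ 1 / 3) : bidPrice y ≤ gapPrice δ (1 / 2) y := by
  unfold gapPrice
  split_ifs with h
  · unfold bidPrice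
    split_ifs <;> linarith
  · rw [bidPrice_of_lt (by linarith), le_div_iff₀ (by positivity)]
    nlinarith

theorem one_le_sum_of_le_add_floor {S : Finset ι} {u P : ι → ℝ} {α γ : ℝ} {k : ℕ} (hα : 0 < α)
    (hγ : 0 ≤ γ) (hk : 0 < k) (hP : ∀ j ∈ S, 0 ≤ P j)
    (hu : ∀ j ∈ S, P j < 1 → u j ≤ α * P j + γ * ⌊k * P j⌋₊)
    (hS : α + γ * (k - 1) ≤ ∑ j ∈ S, u j) : 1 ≤ ∑ j ∈ S, P j := by
  by_contra! hlt
  have hfloor : ∑ j ∈ S, ⌊k * P j⌋₊ + 1 ≤ k := by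
    have h : (∑ j ∈ S, ⌊k * P j⌋₊ : ℝ) < k := calc
      (∑ j ∈ S, ⌊k * P j⌋₊ : ℝ) ≤ ∑ j ∈ S, k * P j :=
        sum_le_sum fun j hj => Nat.floor_le (mul_nonneg k.cast_nonneg (hP j hj))
      _ = k * ∑ j ∈ S, P j := (mul_sum ..).symm
      _ < k := mul_lt_of_lt_one_right (by exact_mod_cast hk) hlt
    exact_mod_cast h
  have hfloor' : (∑ j ∈ S, ⌊k * P j⌋₊ : ℝ) ≤ k - 1 := by
    have : (∑ j ∈ S, ⌊k * P j⌋₊ : ℝ) + 1 ≤ k := by exact_mod_cast hfloor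
    linarith
  refine hS.not_gt ?_
  calc ∑ j ∈ S, u j ≤ ∑ j ∈ S, (α * P j + γ * ⌊k * P j⌋₊) :=
        sum_le_sum fun j hj => hu j hj ((single_le_sum hP hj).trans_lt hlt)
    _ = α * ∑ j ∈ S, P j + γ * ∑ j ∈ S, (⌊k * P j⌋₊ : ℝ) := by
        rw [sum_add_distrib, mul_sum, mul_sum]
    _ < α + γ * (k - 1) := add_lt_add_of_lt_of_le (mul_lt_of_lt_one_right hα hlt)
        (mul_le_mul_of_nonneg_left hfloor' hγ)

theorem one_le_sum_bidPrice {S : Finset ι} {u : ι → ℝ} (hu : ∀ j ∈ S, 0 ≤ u j)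
    (hS : 5 / 3 ≤ ∑ j ∈ S, u j) : 1 ≤ ∑ j ∈ S, bidPrice (u j) :=
  one_le_sum_of_le_add_floor (α := 4 / 3) (γ := 1 / 3) (k := 2) (by norm_num) (by norm_num)
    two_pos (fun j hj => bidPrice_nonneg (hu j hj)) (fun _ _ h => le_bidPrice_add_floor h)
    (by norm_num; exact hS)

theorem one_le_sum_cappedPrice {S : Finset ι} {u : ι → ℝ} (hu : ∀ j ∈ S, 0 ≤ u j)
    (hS : 5 / 3 ≤ ∑ j ∈ S, u j) : 1 ≤ ∑ j ∈ S, cappedPrice (u j) :=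
  one_le_sum_of_le_add_floor (α := 2 / 3) (γ := 1 / 3) (k := 4) (by norm_num) (by norm_num)
    four_pos (fun j hj => cappedPrice_nonneg (hu j hj)) (fun _ _ h => le_cappedPrice_add_floor h)
    (by norm_num; exact hS)

end Prices

section AnyPriceShare

variable {b : ℝ} {v : Finset ι → ℝ} {M : Finset ι}

theorem exists_affordable_APS_le (hb : 0 ≤ b) (hv : ∀ S ⊆ M, 0 ≤ v S) {p : ι → ℝ}
    (hp : ∀ j ∈ M, 0 ≤ p j) (hp_sum : ∑ j ∈ M, p j = 1) :
    ∃ S ⊆ M, ∑ j ∈ S, p j ≤ b ∧ APS b v M ≤ v S := by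
  obtain ⟨S, hS, hmax⟩ := exists_max_image {S ∈ M.powerset | ∑ j ∈ S, p j ≤ b} v
    ⟨∅, by simp [hb]⟩
  simp only [mem_filter, mem_powerset] at hS hmax
  refine ⟨S, hS.1, hS.2, ?_⟩
  unfold APS
  refine le_trans (csInf_le ⟨0, ?_⟩ ⟨p, hp, hp_sum, rfl⟩) ?_
  · rintro _ ⟨q, -, -, rfl⟩
    refine Real.sSup_nonneg ?_
    rintro _ ⟨S', hS', -, rfl⟩
    exact hv S' hS'
  · refine csSup_le ⟨_, ∅, empty_subset M, by simpa using hb, rfl⟩ ?_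
    rintro _ ⟨S', hS', hcost, rfl⟩
    exact hmax S' ⟨hS', hcost⟩

theorem one_le_mul_sum_of_APS_pos (hb : 0 ≤ b) (hv : ∀ S ⊆ M, 0 ≤ v S) (hAPS : 0 < APS b v M)
    {P : ι → ℝ} (hP : ∀ j ∈ M, 0 ≤ P j)
    (hcost : ∀ S ⊆ M, APS b v M ≤ v S → 1 ≤ ∑ j ∈ S, P j) : 1 ≤ b * ∑ j ∈ M, P j := by
  have htotal : 0 < ∑ j ∈ M, P j := by
    have hprices : Set.Nonempty {t : ℝ | ∃ p : ι → ℝ, (∀ j ∈ M, 0 ≤ p j) ∧ ∑ j ∈ M, p j = 1 ∧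
        t = sSup {u : ℝ | ∃ S, S ⊆ M ∧ ∑ j ∈ S, p j ≤ b ∧ u = v S}} := by
      by_contra hempty
      rw [APS, Set.not_nonempty_iff_eq_empty.mp hempty, Real.sInf_empty] at hAPS
      exact lt_irrefl 0 hAPS
    obtain ⟨_, p, hp, hp_sum, -⟩ := hprices
    obtain ⟨S, hSM, -, hS⟩ := exists_affordable_APS_le hb hv hp hp_sum
    exact zero_lt_one.trans_le <| (hcost S hSM hS).trans <|
      sum_le_sum_of_subset_of_nonneg hSM fun j hj _ => hP j hj
  obtain ⟨S, hSM, hSb, hS⟩ := exists_affordable_APS_le hb hv (p := fun j => P j / ∑ k ∈ M, P k)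
    (fun j hj => div_nonneg (hP j hj) htotal.le) (by rw [← sum_div, div_self htotal.ne'])
  rw [← sum_div, div_le_iff₀ htotal] at hSb
  exact (hcost S hSM hS).trans hSb

end AnyPriceShare

section Shares

variable {M : Finset ι} {w : ι → ℝ} {b : ℝ}

/-- The invariant of the APS strategy: the prices of the remaining items `R` still sum to at least
`s`. The bound for `cappedPrice` is only maintained while an item of value at least `1 / 3`
remains, because only then is every payment at least `1 / 4`. -/
def PricesCover (u : ι → ℝ) (R : Finset ι) (s : ℝ) : Prop :=
  s ≤ ∑ j ∈ R, bidPrice (u j) ∧ ∀ t ∈ R, 1 / 3 ≤ u t → s ≤ ∑ j ∈ R, cappedPrice (u j)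

theorem PricesCover.exists_top {u : ι → ℝ} {R : Finset ι} {s : ℝ} (h : PricesCover u R s)
    (hs : 0 < s) : ∃ j ∈ R, ∀ k ∈ R, u k ≤ u j := by
  refine exists_max_image R u ?_
  by_contra! rfl
  exact hs.not_ge (by simpa using h.1)

theorem pricesCover_of_APS_pos (hb : 0 < b) (hw : ∀ j ∈ M, 0 ≤ w j)
    (hAPS : 0 < APS b (fun S => ∑ j ∈ S, w j) M) :
    PricesCover (fun j => w j / (3 / 5 * APS b (fun S => ∑ j ∈ S, w j) M)) M (1 / b) := by
  set z := APS b (fun S => ∑ j ∈ S, w j) M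
  have hu : ∀ S ⊆ M, ∀ j ∈ S, 0 ≤ w j / (3 / 5 * z) := fun S hS j hj =>
    div_nonneg (hw j (hS hj)) (by positivity)
  have hworth : ∀ S : Finset ι, z ≤ ∑ j ∈ S, w j → 5 / 3 ≤ ∑ j ∈ S, w j / (3 / 5 * z) := by
    intro S hS
    rw [← sum_div, le_div_iff₀ (by positivity)]
    linarith
  have hv : ∀ S ⊆ M, 0 ≤ ∑ j ∈ S, w j := fun S hS => sum_nonneg fun j hj => hw j (hS hj)
  have hcover : ∀ q : ℝ → ℝ, (∀ y, 0 ≤ y → 0 ≤ q y) →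
      (∀ S ⊆ M, 5 / 3 ≤ ∑ j ∈ S, w j / (3 / 5 * z) → 1 ≤ ∑ j ∈ S, q (w j / (3 / 5 * z))) →
      1 / b ≤ ∑ j ∈ M, q (w j / (3 / 5 * z)) := by
    intro q hq hcost
    rw [div_le_iff₀' hb]
    exact one_le_mul_sum_of_APS_pos hb.le hv hAPS (fun j hj => hq _ (hu M subset_rfl j hj))
      fun S hS hzS => hcost S hS (hworth S hzS)
  exact ⟨hcover bidPrice (fun _ => bidPrice_nonneg) fun S hS => one_le_sum_bidPrice (hu S hS),
    fun _ _ _ => hcover cappedPrice (fun _ => cappedPrice_nonneg)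
      fun S hS => one_le_sum_cappedPrice (hu S hS)⟩

theorem TPS_spec (h : 0 < TPS b w M) : b * ∑ j ∈ M, min (w j) (TPS b w M) = TPS b w M := by
  have hclosed : IsClosed {z : ℝ | 0 ≤ z ∧ b * ∑ j ∈ M, min (w j) z = z} :=
    (isClosed_le continuous_const continuous_id).inter
      (isClosed_eq (by fun_prop) continuous_id)
  exact (sSup_mem_of_isClosed_of_pos hclosed h).2

theorem exists_card_eq_kthHighest_le {k : ℕ} (h : 0 < kthHighest w M k) :
    ∃ S ⊆ M, #S = k ∧ ∀ j ∈ S, kthHighest w M k ≤ w j := by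
  have hclosed : IsClosed {t : ℝ | ∃ S ⊆ M, #S = k ∧ ∀ j ∈ S, t ≤ w j} := by
    have hunion : {t : ℝ | ∃ S ⊆ M, #S = k ∧ ∀ j ∈ S, t ≤ w j} =
        ⋃ S ∈ M.powersetCard k, ⋂ j ∈ S, Set.Iic (w j) := by
      ext t
      simp [mem_powersetCard, and_assoc]
    rw [hunion]
    exact isClosed_biUnion_finset fun S _ => isClosed_biInter fun j _ => isClosed_Iic
  exact sSup_mem_of_isClosed_of_pos hclosed h

end Shares

variable [DecidableEq ι]

/-- `CanSecure T u R x β a`: in the bidding game, an agent with item values `u`, who holds value `x`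
and has budget `β` left, can reach value at least `T` when the items `R` remain and the opponents
have total budget `a`. In a move that has not reached `T` yet she names a bid `c` and an item `j`;
either she gets `j` for `c`, or the opponents take an item of their choice for some `c' ≥ c`. -/
inductive CanSecure (T : ℝ) (u : ι → ℝ) : Finset ι → ℝ → ℝ → ℝ → Prop
  | done {R x β a} (hT : T ≤ x) : CanSecure T u R x β a
  | bid {R x β a} (c : ℝ) (j : ι) (hc : 0 ≤ c) (hcβ : c ≤ β) (hj : j ∈ R)
      (win : CanSecure T u (R.erase j) (x + u j) (β - c) a)
      (lose : ∀ j' ∈ R, ∀ c', c ≤ c' → c' ≤ a → CanSecure T u (R.erase j') x β (a - c')) :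
      CanSecure T u R x β a

section Allocation

variable {n : ℕ} {R : Finset ι}

theorem isPartition_update_empty (R : Finset ι) (i : Fin n) :
    IsPartition R (Function.update (fun _ => ∅) i R) := by
  refine ⟨fun k => ?_, fun k l hkl => ?_, fun j hj => ⟨i, by simpa using hj⟩⟩
  · by_cases hk : k = i <;> simp [hk]
  · by_cases hk : k = i
    · simp [Function.update_of_ne (show l ≠ i from fun hl => hkl (hk.trans hl.symm))]
    · simp [Function.update_of_ne hk]

theorem IsPartition.update_insert {A : Fin n → Finset ι} {j : ι} (hA : IsPartition (R.erase j) A)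
    (hj : j ∈ R) (i : Fin n) : IsPartition R (Function.update A i (insert j (A i))) := by
  obtain ⟨hsub, hdisj, hcover⟩ := hA
  have hjA : ∀ k, j ∉ A k := fun k hk => notMem_erase j R (hsub k hk)
  refine ⟨fun k => ?_, fun k l hkl => ?_, fun x hx => ?_⟩
  · have hk := (hsub k).trans (erase_subset j R)
    rcases eq_or_ne k i with rfl | hki
    · simpa using insert_subset hj hk
    · simpa [hki] using hk
  · rcases eq_or_ne k i with rfl | hki
    · simpa [hkl.symm, hjA] using hdisj k l hkl
    · rcases eq_or_ne l i with rfl | hli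
      · simpa [hki, hjA] using hdisj k l hkl
      · simpa [hki, hli] using hdisj k l hkl
  · rcases eq_or_ne x j with rfl | hxj
    · exact ⟨i, by simp⟩
    · obtain ⟨k, hk⟩ := hcover x (mem_erase.mpr ⟨hxj, hx⟩)
      rcases eq_or_ne k i with rfl | hki
      · exact ⟨k, by simp [hk]⟩
      · exact ⟨k, by simpa [hki] using hk⟩

/-- One round of the game: the unsatisfied agent with the highest bid takes her item. -/
theorem CanSecure.exists_round {κ : Type*} [Fintype κ] [DecidableEq κ] {T x β : κ → ℝ}
    {w : κ → ι → ℝ} (hβ : ∀ i, 0 ≤ β i)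
    (h : ∀ i, CanSecure (T i) (w i) R (x i) (β i) (∑ k, β k - β i)) (hx : ∃ i, x i < T i) :
    ∃ i, ∃ j ∈ R, ∃ β' : κ → ℝ, (∀ k, 0 ≤ β' k) ∧
      ∀ k, CanSecure (T k) (w k) (R.erase j) ((x + Pi.single i (w i j) : κ → ℝ) k) (β' k)
        (∑ l, β' l - β' k) := by
  have hbid : ∀ i, x i < T i → ∃ c, ∃ j ∈ R, 0 ≤ c ∧ c ≤ β i ∧
      CanSecure (T i) (w i) (R.erase j) (x i + w i j) (β i - c) (∑ k, β k - β i) ∧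
      ∀ j' ∈ R, ∀ c', c ≤ c' → c' ≤ ∑ k, β k - β i →
        CanSecure (T i) (w i) (R.erase j') (x i) (β i) (∑ k, β k - β i - c') := fun i hi => by
    cases h i with
    | done hT => exact absurd hT hi.not_ge
    | bid c j hc hcβ hj win lose => exact ⟨c, j, hj, hc, hcβ, win, lose⟩
  choose! c hc using hbid
  obtain ⟨i, hi, hmax⟩ := exists_max_image {i | x i < T i} c (by simpa [Finset.Nonempty] using hx)
  simp only [mem_filter_univ] at hi hmax
  obtain ⟨j, hj, -, hcβ, win, -⟩ := hc i hi
  have hsum : ∑ k, (β - Pi.single i (c i) : κ → ℝ) k = ∑ k, β k - c i := by simp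
  refine ⟨i, j, hj, β - Pi.single i (c i), fun k => ?_, fun k => ?_⟩
  · rcases eq_or_ne k i with rfl | hki
    · simpa using hcβ
    · simpa [hki] using hβ k
  · rw [hsum]
    rcases eq_or_ne k i with rfl | hki
    · simpa using win
    · simp only [Pi.add_apply, Pi.sub_apply, Pi.single_eq_of_ne hki, add_zero, sub_zero]
      rcases le_or_gt (T k) (x k) with hk | hk
      · exact .done hk
      · obtain ⟨-, -, -, -, -, lose⟩ := hc k hk
        have hpair : β i + β k ≤ ∑ l, β l := by
          rw [← sum_pair hki.symm]
          exact sum_le_univ_sum_of_nonneg hβ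
        rw [sub_right_comm]
        exact lose j hj (c i) (hmax k hk) (by linarith)

theorem CanSecure.exists_isPartition [Nonempty (Fin n)] {T : Fin n → ℝ} {w : Fin n → ι → ℝ}
    (hw : ∀ i, ∀ j ∈ R, 0 ≤ w i j) {x β : Fin n → ℝ} (hβ : ∀ i, 0 ≤ β i)
    (h : ∀ i, CanSecure (T i) (w i) R (x i) (β i) (∑ k, β k - β i)) :
    ∃ A : Fin n → Finset ι, IsPartition R A ∧ ∀ i, T i ≤ x i + ∑ j ∈ A i, w i j := by
  induction R using Finset.strongInduction generalizing x β with
  | H R ih =>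
    by_cases hx : ∃ i, x i < T i
    · obtain ⟨i, j, hj, β', hβ', h'⟩ := CanSecure.exists_round hβ h hx
      obtain ⟨A, hA, hT⟩ := ih _ (erase_ssubset hj)
        (fun k l hl => hw k l (mem_of_mem_erase hl)) hβ' h'
      refine ⟨_, hA.update_insert hj i, fun k => (hT k).trans ?_⟩
      rcases eq_or_ne k i with rfl | hki
      · have hjA : j ∉ A k := fun hjk => notMem_erase j R (hA.1 k hjk)
        simp [sum_insert hjA, add_assoc]
      · simp [hki]
    · push Not at hx
      have hA := isPartition_update_empty R (Classical.arbitrary (Fin n))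
      exact ⟨_, hA, fun i => (hx i).trans <| le_add_of_nonneg_right <|
        sum_nonneg fun j hj => hw i j (hA.1 i hj)⟩

end Allocation

namespace CanSecure

variable {T x β a : ℝ} {u : ι → ℝ} {R : Finset ι}

theorem scale (h : CanSecure T u R x β a) {k s : ℝ} (hk : 0 < k) (hs : 0 < s) :
    CanSecure (k * T) (fun j => k * u j) R (k * x) (s * β) (s * a) := by
  induction h with
  | done hT => exact done (by gcongr)
  | bid c j hc hcβ hj _ _ win lose =>
    refine bid (s * c) j (by positivity) (by gcongr) hj ?_ fun j' hj' c' hc' hc'a => ?_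
    · rwa [← mul_add, ← mul_sub]
    · have := lose j' hj' (c' / s) (by rwa [le_div_iff₀' hs]) (by rwa [div_le_iff₀' hs])
      rwa [mul_sub, mul_div_cancel₀ _ hs.ne'] at this

theorem allIn (hβ : 0 ≤ β) {j : ι} (hj : j ∈ R) (hT : T ≤ x + u j)
    (lose : ∀ j' ∈ R, ∀ c', β ≤ c' → c' ≤ a → CanSecure T u (R.erase j') x β (a - c')) :
    CanSecure T u R x β a :=
  bid β j hβ le_rfl hj (done hT) lose

theorem of_lt_card_mul {S : Finset ι} (hSR : S ⊆ R) (hS : ∀ j ∈ S, T ≤ x + u j) (hβ : 0 ≤ β)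
    (ha : 0 ≤ a) (hcard : a < #S * β) : CanSecure T u R x β a := by
  induction R using Finset.strongInduction generalizing S a with
  | H R ih =>
    obtain ⟨j, hj⟩ : S.Nonempty := by
      by_contra! rfl
      simp [ha.not_gt] at hcard
    refine allIn hβ (hSR hj) (hS j hj) fun j' hj' c' hc' hc'a =>
      ih _ (erase_ssubset hj') (erase_subset_erase j' hSR)
        (fun k hk => hS k (mem_of_mem_erase hk)) (sub_nonneg.mpr hc'a) ?_
    have hpred : (#S : ℝ) ≤ #(S.erase j') + 1 := by
      exact_mod_cast Nat.sub_le_iff_le_add.mp (pred_card_le_card_erase (s := S) (a := j'))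
    nlinarith

/-- Bid `r` times the value of the most valuable item. Each win lowers the remaining gap and the
budget at the same rate `r`, so the surplus `β - r * (T - x)` is the same throughout; once an item
has been won without reaching `T`, this surplus pays for any overshoot. -/
theorem of_proportional {r : ℝ} (hr : 0 < r) (ha : 0 ≤ a) (hu : ∀ j ∈ R, 0 ≤ u j)
    (hafford : ∀ j ∈ R, r * u j ≤ β)
    (hsurplus : ∀ j ∈ R, x + u j < T → r * u j ≤ β - r * (T - x))
    (hsum : a + r * (T - x) ≤ ∑ j ∈ R, r * u j) : CanSecure T u R x β a := by
  induction R using Finset.strongInduction generalizing x β a with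
  | H R ih =>
    rcases le_or_gt T x with hT | hT
    · exact done hT
    have hR : R.Nonempty := by
      by_contra! rfl
      have : 0 < r * (T - x) := mul_pos hr (sub_pos.mpr hT)
      rw [sum_empty] at hsum
      linarith
    obtain ⟨j, hj, hmax⟩ := exists_max_image R u hR
    have hle : ∀ k ∈ R, r * u k ≤ r * u j := fun k hk =>
      mul_le_mul_of_nonneg_left (hmax k hk) hr.le
    refine bid (r * u j) j (mul_nonneg hr.le (hu j hj)) (hafford j hj) hj ?_
      fun j' hj' c' hc' hc'a => ?_
    · rcases le_or_gt T (x + u j) with hT' | hT'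
      · exact done hT'
      have hsurplus_j := hsurplus j hj hT'
      have hgap : 0 ≤ r * (T - (x + u j)) := mul_nonneg hr.le (by linarith)
      refine ih _ (erase_ssubset hj) ha (fun k hk => hu k (mem_of_mem_erase hk))
        (fun k hk => ?_) (fun k hk _ => ?_) ?_
      · linarith [hle k (mem_of_mem_erase hk)]
      · linarith [hle k (mem_of_mem_erase hk)]
      · rw [← add_sum_erase R _ hj] at hsum
        linarith
    · refine ih _ (erase_ssubset hj') (sub_nonneg.mpr hc'a)
        (fun k hk => hu k (mem_of_mem_erase hk)) (fun k hk => hafford k (mem_of_mem_erase hk))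
        (fun k hk => hsurplus k (mem_of_mem_erase hk)) ?_
      rw [← add_sum_erase R _ hj'] at hsum
      linarith [hle j' hj']

theorem of_sum_gapPrice (hx : x < T) (hβ : 0 < β) (ha : 0 ≤ a) (hu : ∀ j ∈ R, 0 ≤ u j)
    (hsum : a + β / 2 ≤ ∑ j ∈ R, gapPrice (T - x) β (u j)) : CanSecure T u R x β a := by
  have hδ : 0 < T - x := sub_pos.mpr hx
  induction R using Finset.strongInduction generalizing a with
  | H R ih =>
    by_cases hbig : ∃ j ∈ R, T - x ≤ u j
    · obtain ⟨j, hj, hTj⟩ := hbig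
      refine allIn hβ.le hj (by linarith) fun j' hj' c' hc' hc'a =>
        ih _ (erase_ssubset hj') (sub_nonneg.mpr hc'a) (fun k hk => hu k (mem_of_mem_erase hk)) ?_
      rw [← add_sum_erase R _ hj'] at hsum
      linarith [gapPrice_le (y := u j') hδ hβ.le]
    · push Not at hbig
      set r := β / (2 * (T - x)) with hr
      have hr_pos : 0 < r := by positivity
      have hr_gap : r * (T - x) = β / 2 := by rw [hr]; field_simp
      have hhalf : ∀ j ∈ R, r * u j ≤ β / 2 := fun j hj =>
        (mul_le_mul_of_nonneg_left (hbig j hj).le hr_pos.le).trans_eq hr_gap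
      refine of_proportional hr_pos ha hu (fun j hj => by linarith [hhalf j hj])
        (fun j hj _ => by linarith [hhalf j hj]) ?_
      rw [hr_gap]
      refine hsum.trans_eq (sum_congr rfl fun j hj => ?_)
      rw [gapPrice, if_neg (hbig j hj).not_ge, hr, div_mul_eq_mul_div]

end CanSecure

section AnyPriceStrategy

variable {u : ι → ℝ} {R : Finset ι} {a s : ℝ}

theorem PricesCover.erase (h : PricesCover u R s) {c y : ℝ} (hy : ∀ k ∈ R, u k ≤ y)
    (hc : bidPrice y ≤ c) {j : ι} (hj : j ∈ R) : PricesCover u (R.erase j) (s - c) := by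
  have hbid : bidPrice (u j) ≤ c := (bidPrice_mono (hy j hj)).trans hc
  refine ⟨?_, fun t ht hut => ?_⟩
  · have := h.1
    rw [← add_sum_erase R _ hj] at this
    linarith
  · have htR := mem_of_mem_erase ht
    have hquarter : 1 / 4 ≤ c := calc
      (1 / 4 : ℝ) = bidPrice (1 / 3) := by rw [bidPrice_of_lt] <;> norm_num
      _ ≤ bidPrice y := bidPrice_mono (hut.trans (hy t htR))
      _ ≤ c := hc
    have hcapped : cappedPrice (u j) ≤ c := (cappedPrice_le_max _).trans (max_le hquarter hbid)
    have := h.2 t htR hut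
    rw [← add_sum_erase R _ hj] at this
    linarith

theorem canSecure_of_two_items {y₁ y₂ : ℝ} (hy : y₂ ≤ y₁) (hlt : y₁ + y₂ < 1)
    (hu : ∀ j ∈ R, 0 ≤ u j) (hy₂ : ∀ j ∈ R, u j ≤ y₂) (ha : 0 ≤ a)
    (h : PricesCover u R (a + (1 - 3 / 4 * (y₁ + y₂)))) :
    CanSecure 1 u R (y₁ + y₂) (1 - 3 / 4 * (y₁ + y₂)) a := by
  by_cases hbig : ∃ t ∈ R, 4 / 3 < y₁ + y₂ + u t
  · obtain ⟨t, ht, hut⟩ := hbig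
    have hty₂ := hy₂ t ht
    refine .of_sum_gapPrice hlt (by linarith) ha hu ?_
    have hprice : ∀ j ∈ R, cappedPrice (u j) ≤
        gapPrice (1 - (y₁ + y₂)) (1 - 3 / 4 * (y₁ + y₂)) (u j) := fun j hj =>
      cappedPrice_le_gapPrice (by linarith [hy₂ j hj]) (hu j hj) (by linarith) (by linarith)
        (by linarith)
    linarith [h.2 t ht (by linarith), sum_le_sum hprice]
  · push Not at hbig
    refine .of_proportional (r := 3 / 4) (by norm_num) ha hu (fun j hj => by linarith [hbig j hj])
      (fun j hj _ => by linarith [hy₂ j hj]) ?_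
    have hsum : ∑ j ∈ R, bidPrice (u j) = ∑ j ∈ R, 3 / 4 * u j :=
      sum_congr rfl fun j hj => bidPrice_of_lt (by linarith [hy₂ j hj])
    linarith [h.1]

theorem canSecure_of_one_item {y : ℝ} (hy : y < 2 / 3) (hu : ∀ j ∈ R, 0 ≤ u j)
    (huy : ∀ j ∈ R, u j ≤ y) (ha : 0 ≤ a) (h : PricesCover u R (a + (1 - 3 / 4 * y))) :
    CanSecure 1 u R y (1 - 3 / 4 * y) a := by
  induction R using Finset.strongInduction generalizing a with
  | H R ih =>
    obtain ⟨j, hj, hmax⟩ := h.exists_top (by linarith)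
    have hbid : bidPrice (u j) = 3 / 4 * u j := bidPrice_of_lt ((huy j hj).trans_lt hy)
    refine .bid (3 / 4 * u j) j (by linarith [hu j hj]) (by linarith [huy j hj]) hj ?_
      fun j' hj' c' hc' hc'a => ?_
    · rcases le_or_gt 1 (y + u j) with hT | hT
      · exact .done hT
      have h' := h.erase hmax le_rfl hj
      rw [hbid, add_sub_assoc, sub_sub, ← mul_add] at h'
      rw [sub_sub, ← mul_add]
      exact canSecure_of_two_items (huy j hj) hT (fun k hk => hu k (mem_of_mem_erase hk))
        (fun k hk => hmax k (mem_of_mem_erase hk)) ha h'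
    · have h' := h.erase hmax (hbid.trans_le hc') hj'
      rw [add_sub_right_comm] at h'
      exact ih _ (erase_ssubset hj') (fun k hk => hu k (mem_of_mem_erase hk))
        (fun k hk => huy k (mem_of_mem_erase hk)) (sub_nonneg.mpr hc'a) h'

theorem canSecure_of_large_item {y : ℝ} (hy : 2 / 3 ≤ y) (hy₁ : y < 1) (hu : ∀ j ∈ R, 0 ≤ u j)
    (huy : ∀ j ∈ R, u j ≤ y) (ha : 0 ≤ a) (h : PricesCover u R (a + 1 / 2)) :
    CanSecure 1 u R y (1 / 2) a := by
  refine .of_sum_gapPrice hy₁ (by norm_num) ha hu ?_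
  have hprice : ∀ j ∈ R, bidPrice (u j) ≤ gapPrice (1 - y) (1 / 2) (u j) := fun j hj =>
    bidPrice_le_gapPrice ((huy j hj).trans_lt hy₁) (hu j hj) (by linarith) (by linarith)
  linarith [h.1, sum_le_sum hprice]

theorem canSecure_of_pricesCover (hu : ∀ j ∈ R, 0 ≤ u j) (ha : 0 ≤ a)
    (h : PricesCover u R (a + 1)) : CanSecure 1 u R 0 1 a := by
  induction R using Finset.strongInduction generalizing a with
  | H R ih =>
    obtain ⟨j, hj, hmax⟩ := h.exists_top (by linarith)
    refine .bid (bidPrice (u j)) j (bidPrice_nonneg (hu j hj)) (bidPrice_le_one _) hj ?_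
      fun j' hj' c' hc' hc'a => ?_
    · have hu' : ∀ k ∈ R.erase j, 0 ≤ u k := fun k hk => hu k (mem_of_mem_erase hk)
      have hmax' : ∀ k ∈ R.erase j, u k ≤ u j := fun k hk => hmax k (mem_of_mem_erase hk)
      have h' := h.erase hmax le_rfl hj
      rw [add_sub_assoc] at h'
      rw [zero_add]
      rcases le_or_gt 1 (u j) with hone | hone
      · exact .done hone
      rcases le_or_gt (2 / 3) (u j) with hlarge | hsmall
      · have hhalf : 1 - bidPrice (u j) = 1 / 2 := by
          rw [bidPrice, if_neg hone.not_ge, if_pos hlarge]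
          norm_num
        rw [hhalf] at h' ⊢
        exact canSecure_of_large_item hlarge hone hu' hmax' ha h'
      · rw [bidPrice_of_lt hsmall] at h' ⊢
        exact canSecure_of_one_item hsmall hu' hmax' ha h'
    · have h' := h.erase hmax hc' hj'
      rw [add_sub_right_comm] at h'
      exact ih _ (erase_ssubset hj') (fun k hk => hu k (mem_of_mem_erase hk))
        (sub_nonneg.mpr hc'a) h'

end AnyPriceStrategy

section ShareStrategies

variable {M : Finset ι} {w : ι → ℝ} {b : ℝ}

theorem canSecure_APS (hb : 0 < b) (hb₁ : b ≤ 1) (hw : ∀ j ∈ M, 0 ≤ w j) :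
    CanSecure (3 / 5 * APS b (fun S => ∑ j ∈ S, w j) M) w M 0 b (1 - b) := by
  rcases le_or_gt (APS b (fun S => ∑ j ∈ S, w j) M) 0 with hAPS | hAPS
  · exact .done (by linarith)
  have hcover := pricesCover_of_APS_pos hb hw hAPS
  set T := 3 / 5 * APS b (fun S => ∑ j ∈ S, w j) M
  have hT : 0 < T := by positivity
  have ha : 0 ≤ 1 / b - 1 := sub_nonneg.mpr ((one_le_div hb).mpr hb₁)
  have h := (canSecure_of_pricesCover (fun j hj => div_nonneg (hw j hj) hT.le) ha
    (by rwa [sub_add_cancel])).scale hT hb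
  simpa only [mul_div_cancel₀ _ hT.ne', mul_one, mul_zero, mul_sub, mul_one_div_cancel hb.ne']
    using h

theorem canSecure_TPS (hb : 0 < b) (hb₁ : b ≤ 1) (hw : ∀ j ∈ M, 0 ≤ w j) :
    CanSecure (1 / (2 - b) * TPS b w M) w M 0 b (1 - b) := by
  have hb₂ : 0 < 2 - b := by linarith
  rcases le_or_gt (TPS b w M) 0 with hz | hz
  · exact .done (mul_nonpos_of_nonneg_of_nonpos (by positivity) hz)
  have hspec := TPS_spec hz
  set z := TPS b w M
  set T := 1 / (2 - b) * z with hT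
  have hT_pos : 0 < T := by positivity
  have hTz : (2 - b) * T = z := by rw [hT]; field_simp
  refine .of_sum_gapPrice hT_pos hb (sub_nonneg.mpr hb₁) hw ?_
  have hprice : ∀ j ∈ M, b * min (w j) z / (2 * T) ≤ gapPrice T b (w j) := by
    intro j _
    rw [gapPrice, div_le_iff₀ (by positivity)]
    split_ifs
    · have hz_le : z ≤ 2 * T := by nlinarith
      exact mul_le_mul_of_nonneg_left ((min_le_right _ _).trans hz_le) hb.le
    · rw [div_mul_cancel₀ _ (by positivity)]
      exact mul_le_mul_of_nonneg_left (min_le_left _ _) hb.le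
  rw [sub_zero]
  calc 1 - b + b / 2 = z / (2 * T) := by rw [← hTz]; field_simp; ring
    _ = ∑ j ∈ M, b * min (w j) z / (2 * T) := by rw [← sum_div, ← mul_sum, hspec]
    _ ≤ ∑ j ∈ M, gapPrice T b (w j) := sum_le_sum hprice

theorem canSecure_kthHighest (hb : 0 < b) (hb₁ : b ≤ 1) :
    CanSecure (kthHighest w M ⌊1 / b⌋₊) w M 0 b (1 - b) := by
  rcases le_or_gt (kthHighest w M ⌊1 / b⌋₊) 0 with h | h
  · exact .done h
  obtain ⟨S, hSM, hcard, hS⟩ := exists_card_eq_kthHighest_le h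
  refine .of_lt_card_mul hSM (by simpa using hS) hb.le (sub_nonneg.mpr hb₁) ?_
  have hfloor := (div_lt_iff₀ hb).mp (Nat.lt_floor_add_one (1 / b))
  rw [hcard]
  linarith

end ShareStrategies

end BiddingGame

/-- For `n` agents with additive valuations and arbitrary entitlements summing to 1,
there is an allocation giving every agent at least the maximum of: 3/5 of her AnyPrice
share, 1/(2 - bᵢ) of her truncated proportional share, and the value of her
⌊1/bᵢ⌋-th highest valued item. -/
theorem aps_three_fifths_allocation {ι : Type*} [DecidableEq ι] (n : ℕ)
    (M : Finset ι) (w : Fin n → ι → ℝ) (b : Fin n → ℝ)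
    (hw : ∀ i, ∀ j ∈ M, 0 ≤ w i j)
    (hb : ∀ i, 0 < b i) (hbsum : ∑ i, b i = 1) :
    ∃ A : Fin n → Finset ι, IsPartition M A ∧
      ∀ i, max (max ((3 / 5) * APS (b i) (fun S => ∑ j ∈ S, w i j) M)
            ((1 / (2 - b i)) * TPS (b i) (w i) M))
          (kthHighest (w i) M ⌊1 / b i⌋₊)
        ≤ ∑ j ∈ A i, w i j := by
  have hne : Nonempty (Fin n) := by
    by_contra! hempty
    simp at hbsum
  have hsecure : ∀ i, CanSecure (max (max ((3 / 5) * APS (b i) (fun S => ∑ j ∈ S, w i j) M)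
      ((1 / (2 - b i)) * TPS (b i) (w i) M)) (kthHighest (w i) M ⌊1 / b i⌋₊))
      (w i) M 0 (b i) (∑ k, b k - b i) := by
    intro i
    have hb₁ : b i ≤ 1 := (single_le_sum (fun k _ => (hb k).le) (mem_univ i)).trans_eq hbsum
    rw [hbsum]
    exact max_rec' (CanSecure · (w i) M 0 (b i) (1 - b i))
      (max_rec' (CanSecure · (w i) M 0 (b i) (1 - b i)) (canSecure_APS (hb i) hb₁ (hw i))
        (canSecure_TPS (hb i) hb₁ (hw i)))
      (canSecure_kthHighest (hb i) hb₁)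
  simpa only [zero_add] using CanSecure.exists_isPartition hw (fun i => (hb i).le) hsecure
end

section
/- For any instance with n agents having additive valuations v_1,…,v_n over a finite set M of indivisible goods and equal entitlements b_i = 1/n for every agent, there exists an allocation (A_1,…,A_n) of M such that every agent i receives value v_i(A_i) at least the minimum of (3/4)·APS(1/n, v_i, M) and (2n/(3n−1))·TPS(1/n, v_i, M). In particular every agent receives at least a 2n/(3n−1) fraction of her AnyPrice share. -/
open Finset

/-!
Sorting the goods by value separately for each agent, it suffices to share out *ranks*: if every
agent `i` could be given a set of ranks worth `τ i` to her, Hall's theorem lets the owner of rank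
`r` receive an actual good that she ranks `r` or better.

Ranks are shared out by reduction. As long as some agent accepts the best remaining rank `s` alone,
or else a pair of ranks `{l, u}` symmetric about the `n`-th one, she takes it and leaves. The
remaining agents share the rest by bag filling, which succeeds if each of them values the rest
at `k (τ + δ) - δ` or more, where `k` is their number and `δ` bounds the goods used as filling.
If the removed middle ranks are worth at most `3/4 τ` each, this follows from the truncated
proportional share with `δ = τ / 2`. Otherwise `δ = τ / 4` works: were the rest worth less than
`k * (4/3 τ)`, explicit prices would make every bundle of value `4/3 τ` unaffordable, contradicting
`4/3 τ ≤ APS`. For `n ≤ 2` the factor `2n / (3n - 1)` exceeds `3/4`, and cut-and-choose gives the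
full AnyPrice share.
-/

section Shares

variable {ι α : Type*} {b c z : ℝ} {w : ι → ℝ} {f : α → ℝ} {M : Finset ι} {N : Finset α}

/-- `c` is an AnyPrice guarantee for entitlement `b`: whatever the prices of the goods, a bundle of
value at least `c` costs at most a `b` fraction of the total price. The prices are not normalised,
so the total price may be zero. -/
def IsAnyPriceGuarantee (b : ℝ) (w : ι → ℝ) (M : Finset ι) (c : ℝ) : Prop :=
  ∀ p : ι → ℝ, (∀ j ∈ M, 0 ≤ p j) →
    ∃ S ⊆ M, ∑ j ∈ S, p j ≤ b * ∑ j ∈ M, p j ∧ c ≤ ∑ j ∈ S, w j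

/-- `z` is at most the `b` fraction of the total value when goods are truncated at `z`. This relaxes
the equation defining the truncated proportional share, which is the largest such `z`. -/
def IsTruncatedGuarantee (b : ℝ) (w : ι → ℝ) (M : Finset ι) (z : ℝ) : Prop :=
  0 ≤ z ∧ z ≤ b * ∑ j ∈ M, min (w j) z

/-- The values `τ` that the allocation procedure for `n` agents can secure for an agent with item
values `w`. -/
def IsTarget (n : ℕ) (w : ι → ℝ) (M : Finset ι) (τ : ℝ) : Prop :=
  IsAnyPriceGuarantee (1 / n) w M (4 / 3 * τ) ∧
    ∃ z, IsTruncatedGuarantee (1 / n) w M z ∧ τ ≤ 2 * n / (3 * n - 1) * z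

lemma IsAnyPriceGuarantee.mono {c' : ℝ} (h : IsAnyPriceGuarantee b w M c) (hc : c' ≤ c) :
    IsAnyPriceGuarantee b w M c' := fun p hp =>
  let ⟨S, hS, hcost, hval⟩ := h p hp
  ⟨S, hS, hcost, hc.trans hval⟩

lemma IsAnyPriceGuarantee.map {φ : ι → α} (hb : 0 ≤ b) (hinj : Set.InjOn φ M)
    (hmaps : Set.MapsTo φ M N) (hφ : ∀ x ∈ M, f (φ x) = w x) (h : IsAnyPriceGuarantee b w M c) :
    IsAnyPriceGuarantee b f N c := by
  classical
  intro p hp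
  obtain ⟨S, hS, hcost, hval⟩ := h (p ∘ φ) fun x hx => hp _ (hmaps hx)
  have hinjS : Set.InjOn φ S := hinj.mono (coe_subset.2 hS)
  refine ⟨S.image φ, image_subset_iff.2 fun x hx => hmaps (hS hx), ?_, ?_⟩
  · calc ∑ r ∈ S.image φ, p r = ∑ x ∈ S, p (φ x) := sum_image hinjS
      _ ≤ b * ∑ x ∈ M, p (φ x) := hcost
      _ = b * ∑ r ∈ M.image φ, p r := by rw [sum_image hinj]
      _ ≤ b * ∑ r ∈ N, p r := by
        gcongr b * ?_
        exact sum_le_sum_of_subset_of_nonneg (image_subset_iff.2 hmaps) fun r hr _ => hp r hr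
  · rwa [sum_image hinjS, sum_congr rfl fun x hx => hφ x (hS hx)]

lemma IsTruncatedGuarantee.map {φ : ι → α} (hb : 0 ≤ b) (hinj : Set.InjOn φ M)
    (hmaps : Set.MapsTo φ M N) (hφ : ∀ x ∈ M, f (φ x) = w x) (hf : ∀ r ∈ N, 0 ≤ f r)
    (h : IsTruncatedGuarantee b w M z) : IsTruncatedGuarantee b f N z := by
  classical
  refine ⟨h.1, h.2.trans ?_⟩
  gcongr b * ?_
  calc ∑ x ∈ M, min (w x) z = ∑ x ∈ M, min (f (φ x)) z :=
        sum_congr rfl fun x hx => by rw [hφ x hx]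
    _ = ∑ r ∈ M.image φ, min (f r) z := (sum_image (f := fun r => min (f r) z) hinj).symm
    _ ≤ ∑ r ∈ N, min (f r) z := sum_le_sum_of_subset_of_nonneg (image_subset_iff.2 hmaps)
        fun r hr _ => le_min (hf r hr) h.1

lemma IsTarget.map {φ : ι → α} {n : ℕ} {τ : ℝ} (hinj : Set.InjOn φ M)
    (hmaps : Set.MapsTo φ M N) (hφ : ∀ x ∈ M, f (φ x) = w x) (hf : ∀ r ∈ N, 0 ≤ f r)
    (h : IsTarget n w M τ) : IsTarget n f N τ := by
  obtain ⟨hprice, z, hz, hτz⟩ := h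
  have hb : (0 : ℝ) ≤ 1 / n := by positivity
  exact ⟨hprice.map hb hinj hmaps hφ, z, hz.map hb hinj hmaps hφ hf, hτz⟩

lemma IsAnyPriceGuarantee.exists_subset_le_mul_sum (h : IsAnyPriceGuarantee b w M c)
    (hw : ∀ j ∈ M, 0 ≤ w j) : ∃ S ⊆ M, c ≤ ∑ j ∈ S, w j ∧ ∑ j ∈ S, w j ≤ b * ∑ j ∈ M, w j :=
  let ⟨S, hS, hcost, hval⟩ := h w hw
  ⟨S, hS, hval, hcost⟩

lemma IsAnyPriceGuarantee.le_mul_sum (h : IsAnyPriceGuarantee b w M c) (hw : ∀ j ∈ M, 0 ≤ w j) :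
    c ≤ b * ∑ j ∈ M, w j :=
  let ⟨_, _, hval, hcost⟩ := h.exists_subset_le_mul_sum hw
  hval.trans hcost

lemma IsAnyPriceGuarantee.isTruncatedGuarantee (h : IsAnyPriceGuarantee b w M c) (hc : 0 ≤ c)
    (hw : ∀ j ∈ M, 0 ≤ w j) : IsTruncatedGuarantee b w M c := by
  refine ⟨hc, ?_⟩
  have hp : ∀ j ∈ M, 0 ≤ min (w j) c := fun j hj => le_min (hw j hj) hc
  obtain ⟨S, hS, hcost, hval⟩ := h (fun j => min (w j) c) hp
  refine le_trans ?_ hcost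
  by_cases hbig : ∃ j ∈ S, c ≤ w j
  · obtain ⟨j, hj, hcj⟩ := hbig
    calc c = min (w j) c := (min_eq_right hcj).symm
      _ ≤ ∑ j ∈ S, min (w j) c :=
        single_le_sum (f := fun j => min (w j) c) (fun i hi => hp i (hS hi)) hj
  · push Not at hbig
    rwa [sum_congr rfl fun j hj => min_eq_left (hbig j hj).le]

section APS

variable {v : Finset ι → ℝ} {p : ι → ℝ}

lemma sSup_affordable_nonneg (hv : ∀ S ⊆ M, 0 ≤ v S) :
    0 ≤ sSup {u : ℝ | ∃ S, S ⊆ M ∧ ∑ j ∈ S, p j ≤ b ∧ u = v S} := by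
  refine Real.sSup_nonneg ?_
  rintro _ ⟨S, hS, -, rfl⟩
  exact hv S hS

lemma aps_nonneg (hv : ∀ S ⊆ M, 0 ≤ v S) : 0 ≤ APS b v M := by
  refine Real.sInf_nonneg ?_
  rintro _ ⟨p, -, -, rfl⟩
  exact sSup_affordable_nonneg hv

lemma exists_affordable_aps_le (hb : 0 ≤ b) (hv : ∀ S ⊆ M, 0 ≤ v S) (hp : ∀ j ∈ M, 0 ≤ p j)
    (hp_sum : ∑ j ∈ M, p j = 1) : ∃ S ⊆ M, ∑ j ∈ S, p j ≤ b ∧ APS b v M ≤ v S := by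
  classical
  obtain ⟨S, hS, hmax⟩ := exists_max_image {S ∈ M.powerset | ∑ j ∈ S, p j ≤ b} v
    ⟨∅, by simpa using hb⟩
  simp only [mem_filter, mem_powerset] at hS hmax
  refine ⟨S, hS.1, hS.2, csInf_le_of_le ⟨0, ?_⟩ ⟨p, hp, hp_sum, rfl⟩ (csSup_le ?_ ?_)⟩
  · rintro _ ⟨q, -, -, rfl⟩
    exact sSup_affordable_nonneg hv
  · exact ⟨v ∅, ∅, empty_subset M, by simpa using hb, rfl⟩
  · rintro _ ⟨T, hTM, hTb, rfl⟩
    exact hmax T ⟨hTM, hTb⟩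

lemma aps_le_of_forall_le (hb : 0 ≤ b) (hv : ∀ S ⊆ M, 0 ≤ v S) (hle : ∀ S ⊆ M, v S ≤ v M) :
    APS b v M ≤ v M := by
  rcases M.eq_empty_or_nonempty with rfl | hM
  · simpa [APS] using hv ∅ subset_rfl
  · have hcard : (#M : ℝ) ≠ 0 := by exact_mod_cast hM.card_pos.ne'
    obtain ⟨S, hS, -, hval⟩ := exists_affordable_aps_le (p := fun _ => 1 / (#M : ℝ)) hb hv
      (fun _ _ => by positivity) (by simp [hcard])
    exact hval.trans (hle S hS)

end APS

lemma isAnyPriceGuarantee_aps (hb : 0 ≤ b) (hw : ∀ j ∈ M, 0 ≤ w j) :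
    IsAnyPriceGuarantee b w M (APS b (fun S => ∑ j ∈ S, w j) M) := by
  intro p hp
  have hv : ∀ S ⊆ M, 0 ≤ ∑ j ∈ S, w j := fun S hS => sum_nonneg fun j hj => hw j (hS hj)
  rcases (sum_nonneg hp).eq_or_lt with hzero | hpos
  · refine ⟨M, subset_rfl, by simp [← hzero], aps_le_of_forall_le hb hv fun S hS => ?_⟩
    exact sum_le_sum_of_subset_of_nonneg hS fun j hj _ => hw j hj
  · obtain ⟨S, hS, hcost, hval⟩ := exists_affordable_aps_le hb hv
      (p := fun j => p j / ∑ j ∈ M, p j) (fun j hj => div_nonneg (hp j hj) hpos.le)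
      (by rw [← sum_div, div_self hpos.ne'])
    rw [← sum_div, div_le_iff₀ hpos] at hcost
    exact ⟨S, hS, hcost, hval⟩

lemma mul_sum_mem_upperBounds_tps (hb : 0 ≤ b) :
    b * ∑ j ∈ M, w j ∈ upperBounds {z : ℝ | 0 ≤ z ∧ b * ∑ j ∈ M, min (w j) z = z} := by
  rintro z ⟨-, hz⟩
  rw [← hz]
  gcongr
  exact min_le_left _ _

lemma isTruncatedGuarantee_tps (hb : 0 ≤ b) (hw : ∀ j ∈ M, 0 ≤ w j) :
    IsTruncatedGuarantee b w M (TPS b w M) := by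
  have hclosed : IsClosed {z : ℝ | 0 ≤ z ∧ b * ∑ j ∈ M, min (w j) z = z} :=
    isClosed_Ici.inter (isClosed_eq (by fun_prop) continuous_id)
  have hzero : b * ∑ j ∈ M, min (w j) 0 = 0 := by
    rw [sum_eq_zero fun j hj => min_eq_right (hw j hj), mul_zero]
  obtain ⟨hnonneg, heq⟩ := hclosed.csSup_mem ⟨0, le_rfl, hzero⟩ ⟨_, mul_sum_mem_upperBounds_tps hb⟩
  exact ⟨hnonneg, heq.ge⟩

lemma IsTruncatedGuarantee.le_tps (hb : 0 ≤ b) (h : IsTruncatedGuarantee b w M z) :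
    z ≤ TPS b w M := by
  have hle : ∀ y, b * ∑ j ∈ M, min (w j) y ≤ b * ∑ j ∈ M, w j := fun y => by
    gcongr
    exact min_le_left _ _
  obtain ⟨y, hy, hfix⟩ := exists_mem_Icc_isFixedPt (f := fun y => b * ∑ j ∈ M, min (w j) y)
    (by fun_prop) (h.2.trans (hle z)) h.2 (hle _)
  exact hy.1.trans (le_csSup ⟨_, mul_sum_mem_upperBounds_tps hb⟩ ⟨h.1.trans hy.1, hfix⟩)

lemma isTarget_min_aps_tps (n : ℕ) (hw : ∀ j ∈ M, 0 ≤ w j) :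
    IsTarget n w M (min (3 / 4 * APS (1 / n) (fun S => ∑ j ∈ S, w j) M)
      (2 * n / (3 * n - 1) * TPS (1 / n) w M)) := by
  have hb : (0 : ℝ) ≤ 1 / n := by positivity
  refine ⟨(isAnyPriceGuarantee_aps hb hw).mono ?_, _, isTruncatedGuarantee_tps hb hw,
    min_le_right _ _⟩
  linarith [min_le_left (3 / 4 * APS (1 / n) (fun S => ∑ j ∈ S, w j) M)
    (2 * n / (3 * n - 1) * TPS (1 / n) w M)]

lemma aps_le_tps (hb : 0 ≤ b) (hw : ∀ j ∈ M, 0 ≤ w j) :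
    APS b (fun S => ∑ j ∈ S, w j) M ≤ TPS b w M :=
  ((isAnyPriceGuarantee_aps hb hw).isTruncatedGuarantee
    (aps_nonneg fun _ hS => sum_nonneg fun j hj => hw j (hS hj)) hw).le_tps hb

lemma mul_aps_le_min_aps_tps {n : ℕ} (hn : 3 ≤ n) (hw : ∀ j ∈ M, 0 ≤ w j) :
    2 * n / (3 * n - 1) * APS (1 / n) (fun S => ∑ j ∈ S, w j) M ≤
      min (3 / 4 * APS (1 / n) (fun S => ∑ j ∈ S, w j) M)
        (2 * n / (3 * n - 1) * TPS (1 / n) w M) := by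
  have hn' : (3 : ℝ) ≤ n := by exact_mod_cast hn
  have hpos : (0 : ℝ) < 3 * n - 1 := by linarith
  have hratio : 2 * (n : ℝ) / (3 * n - 1) ≤ 3 / 4 := by
    rw [div_le_div_iff₀ hpos (by norm_num)]
    linarith
  refine le_min (mul_le_mul_of_nonneg_right hratio ?_) (mul_le_mul_of_nonneg_left ?_ ?_)
  · exact aps_nonneg fun S hS => sum_nonneg fun j hj => hw j (hS hj)
  · exact aps_le_tps (by positivity) hw
  · positivity

end Shares

section CanSatisfy

variable {κ α : Type*} {v : κ → α → ℝ} {τ δ : κ → ℝ} {R : Finset κ}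

lemma exists_bag_extension {b : κ → ℝ} {Q : Finset α} (hb : ∀ i ∈ R, b i ≤ τ i)
    (hδ : ∀ i ∈ R, 0 ≤ δ i) (hQ : ∀ i ∈ R, ∀ r ∈ Q, v i r ≤ δ i)
    (hfull : ∃ i ∈ R, τ i ≤ b i + ∑ r ∈ Q, v i r) :
    ∃ T ⊆ Q, (∃ i ∈ R, τ i ≤ b i + ∑ r ∈ T, v i r) ∧
      ∀ i ∈ R, b i + ∑ r ∈ T, v i r ≤ τ i + δ i := by
  classical
  obtain ⟨T, hTQ, haccept, hmin⟩ := exists_minimal_le_of_wellFoundedLT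
    (fun T : Finset α => ∃ i ∈ R, τ i ≤ b i + ∑ r ∈ T, v i r) Q hfull
  refine ⟨T, hTQ, haccept, fun i hi => ?_⟩
  rcases T.eq_empty_or_nonempty with rfl | ⟨r, hr⟩
  · rw [sum_empty]
    linarith [hb i hi, hδ i hi]
  · have hreject : b i + ∑ q ∈ T.erase r, v i q < τ i := by
      by_contra! hle
      exact notMem_erase r T (hmin ⟨i, hi, hle⟩ (erase_subset r T) hr)
    linarith [sum_erase_add T (v i) hr, hQ i hi r (hTQ hr)]

lemma exists_bag [DecidableEq α] {P Q : Finset α} (hR : R.Nonempty) (hPR : #P ≤ #R)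
    (hτ : ∀ i ∈ R, 0 ≤ τ i) (hδ : ∀ i ∈ R, 0 ≤ δ i) (hP : ∀ i ∈ R, ∀ r ∈ P, v i r ≤ τ i)
    (hQ : ∀ i ∈ R, ∀ r ∈ Q, v i r ≤ δ i)
    (hsum : ∀ i ∈ R, #R * (τ i + δ i) - δ i ≤ ∑ r ∈ P, v i r + ∑ r ∈ Q, v i r) :
    ∃ B ⊆ P, ∃ T ⊆ Q, #(P \ B) + 1 ≤ #R ∧ (∃ i ∈ R, τ i ≤ ∑ r ∈ B, v i r + ∑ r ∈ T, v i r) ∧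
      ∀ i ∈ R, ∑ r ∈ B, v i r + ∑ r ∈ T, v i r ≤ τ i + δ i := by
  have hRpos : 1 ≤ #R := hR.card_pos
  obtain ⟨B, hBP, hBcard, hBτ⟩ :
      ∃ B ⊆ P, #(P \ B) + 1 ≤ #R ∧ ∀ i ∈ R, ∑ r ∈ B, v i r ≤ τ i := by
    rcases P.eq_empty_or_nonempty with rfl | ⟨r, hr⟩
    · exact ⟨∅, by simp, by simpa using hRpos, by simpa using hτ⟩
    · refine ⟨{r}, by simpa using hr, ?_, fun i hi => by simpa using hP i hi r hr⟩
      rwa [card_sdiff_of_subset (by simpa using hr), card_singleton,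
        Nat.sub_add_cancel (card_pos.2 ⟨r, hr⟩)]
  obtain ⟨i, hi⟩ := hR
  have hfull : τ i ≤ ∑ r ∈ B, v i r + ∑ r ∈ Q, v i r := by
    have hrest : ∑ r ∈ P \ B, v i r ≤ (#R - 1) * τ i := by
      calc ∑ r ∈ P \ B, v i r ≤ #(P \ B) • τ i :=
            sum_le_card_nsmul _ _ _ fun r hr => hP i hi r (sdiff_subset hr)
        _ ≤ (#R - 1) * τ i := by
          rw [nsmul_eq_mul]
          gcongr
          · exact hτ i hi
          · exact le_sub_iff_add_le.2 (by exact_mod_cast hBcard)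
    have hRδ : 0 ≤ (#R - 1) * δ i :=
      mul_nonneg (sub_nonneg.2 (by exact_mod_cast hRpos)) (hδ i hi)
    linarith [hsum i hi, sum_sdiff (f := v i) hBP]
  obtain ⟨T, hTQ, haccept, hbag⟩ := exists_bag_extension hBτ hδ hQ ⟨i, hi, hfull⟩
  exact ⟨B, hBP, T, hTQ, hBcard, haccept, hbag⟩

variable [DecidableEq κ]

/-- The goods in `U` can be shared out, `a r` being the owner of the good `r`, so that each agent
`i ∈ R` gets a bundle worth at least `τ i` to her. Agents outside `R` may own goods too. -/
def CanSatisfy (v : κ → α → ℝ) (τ : κ → ℝ) (R : Finset κ) (U : Finset α) : Prop :=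
  ∃ a : α → κ, ∀ i ∈ R, τ i ≤ ∑ r ∈ U with a r = i, v i r

lemma canSatisfy_empty [Nonempty κ] (v : κ → α → ℝ) (τ : κ → ℝ) (U : Finset α) :
    CanSatisfy v τ ∅ U := by
  simp [CanSatisfy]

lemma CanSatisfy.exists_isPartition [DecidableEq α] {n : ℕ} {v : Fin n → α → ℝ} {τ : Fin n → ℝ}
    {M : Finset α} (h : CanSatisfy v τ univ M) :
    ∃ A : Fin n → Finset α, IsPartition M A ∧ ∀ i, τ i ≤ ∑ j ∈ A i, v i j := by
  obtain ⟨a, ha⟩ := h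
  refine ⟨fun i => {x ∈ M | a x = i}, ⟨fun i => filter_subset _ _, fun i j hij => ?_,
    fun x hx => ⟨a x, by simpa using hx⟩⟩, fun i => ha i (mem_univ i)⟩
  exact disjoint_filter.2 fun x _ hi hj => hij (hi.symm.trans hj)

lemma CanSatisfy.of_erase [DecidableEq α] {U B : Finset α} {i : κ} (hBU : B ⊆ U)
    (hv : ∀ r ∈ U, 0 ≤ v i r) (hB : τ i ≤ ∑ r ∈ B, v i r) (h : CanSatisfy v τ (R.erase i) (U \ B)) :
    CanSatisfy v τ R U := by
  obtain ⟨a, ha⟩ := h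
  refine ⟨fun r => if r ∈ B then i else a r, fun j hj => ?_⟩
  by_cases hji : j = i
  · subst hji
    refine hB.trans (sum_le_sum_of_subset_of_nonneg (fun r hr => ?_) fun r hr _ => ?_)
    · simp [hBU hr, hr]
    · exact hv r (mem_of_mem_filter r hr)
  · convert ha j (mem_erase.2 ⟨hji, hj⟩) using 2
    grind

lemma canSatisfy_pair_of_guarantee {i j : κ} {M : Finset α} (hv : ∀ k, ∀ r ∈ M, 0 ≤ v k r)
    (hi : IsAnyPriceGuarantee (1 / 2) (v i) M (τ i))
    (hj : IsAnyPriceGuarantee (1 / 2) (v j) M (τ j)) : CanSatisfy v τ {i, j} M := by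
  classical
  have : Nonempty κ := ⟨i⟩
  obtain ⟨S, hS, hval, hcost⟩ := hi.exists_subset_le_mul_sum (hv i)
  have hcompl : τ i ≤ ∑ r ∈ M \ S, v i r := by linarith [sum_sdiff (f := v i) hS]
  have choose_bundle : ∀ B ⊆ M, τ i ≤ ∑ r ∈ M \ B, v i r → τ j ≤ ∑ r ∈ B, v j r →
      CanSatisfy v τ {i, j} M := fun B hB hBi hBj => by
    refine .of_erase hB (hv j) hBj (.of_erase (i := i) subset_rfl ?_ hBi ?_)
    · exact fun r hr => hv i r (sdiff_subset hr)
    · convert canSatisfy_empty v τ _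
      grind
  have hhalf := hj.le_mul_sum (hv j)
  rcases le_total (∑ r ∈ S, v j r) (∑ r ∈ M \ S, v j r) with h | h
  · refine choose_bundle (M \ S) sdiff_subset ?_ ?_
    · rwa [Finset.sdiff_sdiff_eq_self hS]
    · linarith [sum_sdiff (f := v j) hS]
  · exact choose_bundle S hS hcompl (by linarith [sum_sdiff (f := v j) hS])

lemma canSatisfy_of_bag_filling [DecidableEq α] [Nonempty κ] {P Q : Finset α} (hPR : #P ≤ #R)
    (hPQ : Disjoint P Q) (hv : ∀ i ∈ R, ∀ r ∈ P ∪ Q, 0 ≤ v i r) (hτ : ∀ i ∈ R, 0 ≤ τ i)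
    (hδ : ∀ i ∈ R, 0 ≤ δ i) (hP : ∀ i ∈ R, ∀ r ∈ P, v i r ≤ τ i)
    (hQ : ∀ i ∈ R, ∀ r ∈ Q, v i r ≤ δ i)
    (hsum : ∀ i ∈ R, #R * (τ i + δ i) - δ i ≤ ∑ r ∈ P, v i r + ∑ r ∈ Q, v i r) :
    CanSatisfy v τ R (P ∪ Q) := by
  induction hk : #R generalizing R P Q with
  | zero =>
    rw [card_eq_zero] at hk
    exact hk ▸ canSatisfy_empty v τ _
  | succ k ih =>
    obtain ⟨B, hBP, T, hTQ, hBcard, ⟨i, hi, haccept⟩, hbag⟩ :=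
      exists_bag (card_pos.1 (by omega)) hPR hτ hδ hP hQ hsum
    simp only [hk, Nat.cast_add, Nat.cast_one] at hsum
    have hrest : (P ∪ Q) \ (B ∪ T) = (P \ B) ∪ (Q \ T) := by
      rw [union_sdiff_distrib, sdiff_union_distrib]
      grind [disjoint_left]
    refine .of_erase (union_subset_union hBP hTQ) (hv i hi)
      (haccept.trans_eq (sum_union (hPQ.mono hBP hTQ)).symm) ?_
    have hsub := erase_subset i R
    rw [hrest]
    refine ih ?_ (hPQ.mono sdiff_subset sdiff_subset) ?_ (fun j hj => hτ j (hsub hj))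
      (fun j hj => hδ j (hsub hj)) (fun j hj r hr => hP j (hsub hj) r (sdiff_subset hr))
      (fun j hj r hr => hQ j (hsub hj) r (sdiff_subset hr)) (fun j hj => ?_) ?_
    · rw [card_erase_of_mem hi]
      omega
    · exact fun j hj r hr => hv j (hsub hj) r (union_subset_union sdiff_subset sdiff_subset hr)
    · rw [cast_card_erase_of_mem hi, hk]
      push_cast
      linarith [hsum j (hsub hj), hbag j (hsub hj), sum_sdiff (f := v j) hBP,
        sum_sdiff (f := v j) hTQ]
    · rw [card_erase_of_mem hi]
      omega

end CanSatisfy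

section Blocks

variable {f : ℕ → ℝ} {n s l u K : ℕ} {a c : ℝ}

lemma sum_range_eq_sum_blocks (g : ℕ → ℝ) (hsl : s ≤ l) (hlu : l ≤ u) (huK : u ≤ K) :
    ∑ r ∈ range K, g r = ∑ r ∈ range s, g r + ∑ r ∈ Ico s l, g r + ∑ r ∈ Ico l u, g r +
      ∑ r ∈ Ico u K, g r := by
  simp only [sum_range_add_sum_Ico, hsl, hlu, huK]

lemma sum_lt_add_of_price {ι : Type*} {S : Finset ι} {f p : ι → ℝ} (large : ι → Prop) {γ d : ℝ}
    (hd : 0 ≤ d) (hp : ∀ r ∈ S, 0 ≤ p r) (hlarge : ∀ r ∈ S, large r → γ / 2 ≤ p r)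
    (hlarge_val : ∀ r ∈ S, large r → f r ≤ p r + d) (hsmall_val : ∀ r ∈ S, ¬large r → f r ≤ p r)
    (hS : ∑ r ∈ S, p r < γ) : ∑ r ∈ S, f r < γ + d := by
  classical
  have hγ : 0 < γ := (sum_nonneg hp).trans_lt hS
  have hcard : #{r ∈ S | large r} ≤ 1 := by
    by_contra! htwo
    have htwo' : (2 : ℝ) ≤ #{r ∈ S | large r} := by exact_mod_cast htwo
    have : #{r ∈ S | large r} * (γ / 2) < γ := by
      calc #{r ∈ S | large r} * (γ / 2) ≤ ∑ r ∈ S with large r, p r := by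
            rw [← nsmul_eq_mul]
            exact card_nsmul_le_sum _ _ _ fun r hr =>
              hlarge r (mem_filter.1 hr).1 (mem_filter.1 hr).2
        _ ≤ ∑ r ∈ S, p r := sum_le_sum_of_subset_of_nonneg (filter_subset _ _) fun r hr _ => hp r hr
        _ < γ := hS
    nlinarith
  calc ∑ r ∈ S, f r ≤ ∑ r ∈ S, (p r + if large r then d else 0) := by
        refine sum_le_sum fun r hr => ?_
        split_ifs with h
        · exact hlarge_val r hr h
        · simpa using hsmall_val r hr h
    _ = ∑ r ∈ S, p r + #{r ∈ S | large r} * d := by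
      rw [sum_add_distrib, ← sum_filter, sum_const, nsmul_eq_mul]
    _ ≤ ∑ r ∈ S, p r + d := by
      gcongr
      exact mul_le_of_le_one_left hd (by exact_mod_cast hcard)
    _ < γ + d := by gcongr

/-- Prices witnessing that bundles of value `c` are expensive when the ranks in `[s, l)` and
`[u, K)` are worth little. A budget of `2 * (c - a)` buys no rank below `s` and less than two ranks
below `u`; each of the latter is undervalued by `2 * a - c` at most. -/
def blockPrice (f : ℕ → ℝ) (s l u : ℕ) (a c : ℝ) (r : ℕ) : ℝ :=
  if r < s then 2 * (c - a)
  else if r < l then f r - (2 * a - c)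
  else if r < u then c - a
  else f r

lemma sum_blockPrice (hsl : s ≤ l) (hlu : l ≤ u) (huK : u ≤ K) :
    ∑ r ∈ range K, blockPrice f s l u a c r = (l + u) * (c - a) +
      (∑ r ∈ Ico s l, f r + ∑ r ∈ Ico u K, f r - (l - s) * c) := by
  have hhead : ∑ r ∈ range s, blockPrice f s l u a c r = s * (2 * (c - a)) := by
    have : ∀ r ∈ range s, blockPrice f s l u a c r = 2 * (c - a) := by grind [blockPrice]
    rw [sum_congr rfl this, sum_const, card_range, nsmul_eq_mul]
  have hbig : ∑ r ∈ Ico s l, blockPrice f s l u a c r =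
      ∑ r ∈ Ico s l, f r - (l - s) * (2 * a - c) := by
    have : ∀ r ∈ Ico s l, blockPrice f s l u a c r = f r - (2 * a - c) := by grind [blockPrice]
    rw [sum_congr rfl this, sum_sub_distrib, sum_const, Nat.card_Ico, nsmul_eq_mul,
      Nat.cast_sub hsl]
  have hmid : ∑ r ∈ Ico l u, blockPrice f s l u a c r = (u - l) * (c - a) := by
    have : ∀ r ∈ Ico l u, blockPrice f s l u a c r = c - a := by grind [blockPrice]
    rw [sum_congr rfl this, sum_const, Nat.card_Ico, nsmul_eq_mul, Nat.cast_sub hlu]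
  have htail : ∑ r ∈ Ico u K, blockPrice f s l u a c r = ∑ r ∈ Ico u K, f r :=
    sum_congr rfl (by grind [blockPrice])
  rw [sum_range_eq_sum_blocks _ hsl hlu huK, hhead, hbig, hmid, htail]
  ring

lemma IsAnyPriceGuarantee.mul_le_sum_blocks (h : IsAnyPriceGuarantee (1 / n) f (range K) c)
    (hn : 0 < n) (hsl : s ≤ l) (hlu : l ≤ u) (huK : u ≤ K) (hsymm : l + u = 2 * n)
    (hca : c ≤ 2 * a) (hac : a < c) (hbig : ∀ r ∈ Ico s l, a ≤ f r)
    (hmid : ∀ r ∈ Ico l u, f r ≤ a) (htail : ∀ r ∈ Ico u K, 0 ≤ f r) :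
    (l - s) * c ≤ ∑ r ∈ Ico s l, f r + ∑ r ∈ Ico u K, f r := by
  by_contra! hlt
  have hp : ∀ r ∈ range K, 0 ≤ blockPrice f s l u a c r := by grind [blockPrice]
  obtain ⟨S, hS, hcost, hval⟩ := h _ hp
  have hbudget : ∑ r ∈ S, blockPrice f s l u a c r < 2 * (c - a) := by
    have hsymm' : (l + u : ℝ) = 2 * n := by exact_mod_cast hsymm
    refine hcost.trans_lt ?_
    rw [one_div_mul_eq_div, div_lt_iff₀ (by exact_mod_cast hn), sum_blockPrice hsl hlu huK, hsymm']
    linarith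
  have hhead : ∀ r ∈ S, s ≤ r := by
    intro r hr
    by_contra! hrs
    have := single_le_sum (fun q hq => hp q (hS hq)) hr
    rw [blockPrice, if_pos hrs] at this
    linarith
  have : ∑ r ∈ S, f r < 2 * (c - a) + (2 * a - c) :=
    sum_lt_add_of_price (· < u) (by linarith) (fun r hr => hp r (hS hr))
      (by grind [blockPrice]) (by grind [blockPrice]) (by grind [blockPrice]) hbudget
  linarith

lemma IsTruncatedGuarantee.le_sum_blocks {z t : ℝ} (h : IsTruncatedGuarantee (1 / n) f (range K) z)
    (hn : 0 < n) (hsl : s ≤ l) (hlu : l ≤ u) (huK : u ≤ K) (hmid : ∀ r ∈ Ico l u, f r ≤ t) :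
    (n - s) * z - (u - l) * t ≤ ∑ r ∈ Ico s l, f r + ∑ r ∈ Ico u K, f r := by
  have htotal : z * n ≤ ∑ r ∈ range K, min (f r) z := by
    rw [← le_div_iff₀ (by exact_mod_cast hn), ← one_div_mul_eq_div]
    exact h.2
  have hhead : ∑ r ∈ range s, min (f r) z ≤ s * z := by
    simpa using sum_le_card_nsmul (range s) _ z fun r _ => min_le_right (f r) z
  have hmid' : ∑ r ∈ Ico l u, min (f r) z ≤ (u - l) * t := by
    simpa [Nat.cast_sub hlu] using
      sum_le_card_nsmul (Ico l u) _ t fun r hr => (min_le_left _ z).trans (hmid r hr)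
  have hkept : ∀ I : Finset ℕ, ∑ r ∈ I, min (f r) z ≤ ∑ r ∈ I, f r := fun I =>
    sum_le_sum fun r _ => min_le_left _ _
  rw [sum_range_eq_sum_blocks _ hsl hlu huK] at htotal
  linarith [hkept (Ico s l), hkept (Ico u K)]

lemma IsTarget.exists_filling_bound {τ : ℝ} (h : IsTarget n f (range K) τ) (hf : Antitone f)
    (hf₀ : ∀ r, 0 ≤ f r) (hsl : s ≤ l) (hlu : l + 1 ≤ u) (huK : u ≤ K)
    (hsymm : l + 1 + u = 2 * n) (hsingle : f s < τ) (hpair : f l + f u < τ) :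
    ∃ δ, 0 ≤ δ ∧ f u ≤ δ ∧ (l + 1 - s) * (τ + δ) - δ ≤
      ∑ r ∈ Ico s (l + 1), f r + ∑ r ∈ Ico u K, f r := by
  obtain ⟨hprice, z, htrunc, hτz⟩ := h
  have hτ : 0 < τ := (hf₀ s).trans_lt hsingle
  have hn : 0 < n := by omega
  have hn' : (1 : ℝ) ≤ n := by exact_mod_cast hn
  have hsl' : (s : ℝ) ≤ l := by exact_mod_cast hsl
  have hsymm' : (u : ℝ) = 2 * n - (l + 1) := eq_sub_of_add_eq' (by exact_mod_cast hsymm)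
  have hmid : ∀ r ∈ Ico (l + 1) u, f r ≤ f l := fun r hr => hf (by grind)
  rcases le_or_gt (f l) (3 / 4 * τ) with hlight | hheavy
  · refine ⟨τ / 2, by positivity, by linarith [hf (show l ≤ u by omega)], ?_⟩
    have hrest := htrunc.le_sum_blocks (s := s) hn (by omega) hlu huK fun r hr =>
      (hmid r hr).trans hlight
    push_cast [hsymm'] at hrest
    have hz : 3 / 2 * (n - s) * τ - τ / 2 ≤ (n - s) * z := by
      have hτz' : (3 * n - 1) * τ ≤ 2 * n * z := by
        rwa [div_mul_eq_mul_div, le_div_iff₀ (by linarith), mul_comm] at hτz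
      have hns : (0 : ℝ) ≤ n - s := sub_nonneg.2 (by exact_mod_cast show s ≤ n by omega)
      have hsτ : 0 ≤ s * τ := by positivity
      have := mul_le_mul_of_nonneg_left hτz' hns
      refine le_of_mul_le_mul_left (a := 2 * (n : ℝ)) ?_ (by positivity)
      linarith
    linarith
  · refine ⟨τ / 4, by positivity, by linarith, ?_⟩
    have hrest := hprice.mul_le_sum_blocks (s := s) (a := f l) hn (by omega) hlu huK hsymm
      (by linarith) (by linarith [hf hsl]) (fun r hr => hf (by grind)) hmid fun r _ => hf₀ r
    push_cast at hrest
    have hcount : 0 ≤ (l + 1 - s) * τ := mul_nonneg (by linarith) hτ.le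
    linarith

end Blocks

section Ranks

variable {κ : Type*} [DecidableEq κ] [Nonempty κ] {f : κ → ℕ → ℝ} {τ : κ → ℝ} {R : Finset κ}
  {n s u K : ℕ}

lemma canSatisfy_of_single_lt (hf : ∀ i, Antitone (f i)) (hf₀ : ∀ i r, 0 ≤ f i r)
    (hK : 2 * n ≤ K) (hτ : ∀ i ∈ R, IsTarget n (f i) (range K) (τ i))
    (hu : s + #R ≤ u) (hsymm : s + #R + u = 2 * n) (hsingle : ∀ i ∈ R, f i s < τ i) :
    CanSatisfy f τ R (Ico s (s + #R) ∪ Ico u K) := by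
  induction hk : #R generalizing R u with
  | zero =>
    rw [card_eq_zero] at hk
    exact hk ▸ canSatisfy_empty f τ _
  | succ k ih =>
    rw [hk] at hu hsymm
    by_cases hpair : ∃ i ∈ R, τ i ≤ f i (s + k) + f i u
    · obtain ⟨i, hi, haccept⟩ := hpair
      have hcard : #(R.erase i) = k := by simp [card_erase_of_mem hi, hk]
      refine .of_erase (B := {s + k, u}) (i := i) (by grind) (fun r _ => hf₀ i r) ?_ ?_
      · rwa [sum_pair (by omega)]
      · have hrest : (Ico s (s + (k + 1)) ∪ Ico u K) \ {s + k, u} =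
            Ico s (s + k) ∪ Ico (u + 1) K := by grind
        rw [hrest]
        exact ih (fun j hj => hτ j (mem_of_mem_erase hj)) (by omega) (by omega)
          (fun j hj => hsingle j (mem_of_mem_erase hj)) hcard
    · push Not at hpair
      choose! δ hδ hδu hsum using fun i (hi : i ∈ R) => (hτ i hi).exists_filling_bound (hf i)
        (hf₀ i) le_self_add hu (by omega) hsymm (hsingle i hi) (hpair i hi)
      refine canSatisfy_of_bag_filling (δ := δ) (by simp [hk]) ?_ (fun i _ r _ => hf₀ i r)
        (fun i hi => (hf₀ i s).trans (hsingle i hi).le) hδ ?_ ?_ fun i hi => ?_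
      · grind [disjoint_left]
      · exact fun i hi r hr => (hf i (mem_Ico.1 hr).1).trans (hsingle i hi).le
      · exact fun i hi r hr => (hf i (mem_Ico.1 hr).1).trans (hδu i hi)
      · have := hsum i hi
        rw [hk, ← add_assoc]
        push_cast at this ⊢
        linarith

lemma canSatisfy_Ico_of_isTarget (hf : ∀ i, Antitone (f i)) (hf₀ : ∀ i r, 0 ≤ f i r)
    (hK : 2 * n ≤ K) (hτ : ∀ i ∈ R, IsTarget n (f i) (range K) (τ i)) (hR : s + #R = n) :
    CanSatisfy f τ R (Ico s K) := by
  induction hk : #R generalizing R s with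
  | zero =>
    rw [card_eq_zero] at hk
    exact hk ▸ canSatisfy_empty f τ _
  | succ k ih =>
    by_cases hsingle : ∃ i ∈ R, τ i ≤ f i s
    · obtain ⟨i, hi, haccept⟩ := hsingle
      have hcard : #(R.erase i) = k := by simp [card_erase_of_mem hi, hk]
      refine .of_erase (B := {s}) (by grind) (fun r _ => hf₀ i r) (by simpa using haccept) ?_
      have hrest : Ico s K \ {s} = Ico (s + 1) K := by grind
      rw [hrest]
      exact ih (fun j hj => hτ j (mem_of_mem_erase hj)) (by omega) hcard
    · push Not at hsingle
      have := canSatisfy_of_single_lt hf hf₀ hK hτ hR.le (by omega) hsingle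
      rwa [hR, Ico_union_Ico_eq_Ico (by omega) (by omega)] at this

end Ranks

section Ranking

variable {ι κ : Type*} {w : ι → ℝ} {M : Finset ι} {pos : ι → ℕ} {f : ℕ → ℝ}

/-- The goods in `M` are ranked in order of decreasing value: `pos x` is the rank of `x`, counted
from `0`, and `f r` is the value of the good of rank `r`, or `0` if there are at most `r` goods. -/
structure IsRanking (w : ι → ℝ) (M : Finset ι) (pos : ι → ℕ) (f : ℕ → ℝ) : Prop where
  bijOn : Set.BijOn pos M (range #M)
  apply_pos : ∀ x ∈ M, f (pos x) = w x
  antitone : Antitone f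
  eq_zero : ∀ r, #M ≤ r → f r = 0

lemma IsRanking.nonneg (h : IsRanking w M pos f) (r : ℕ) : 0 ≤ f r :=
  (h.eq_zero _ (le_max_right r #M)).ge.trans (h.antitone (le_max_left r #M))

lemma exists_isRanking (hw : ∀ j ∈ M, 0 ≤ w j) : ∃ pos f, IsRanking w M pos f := by
  classical
  obtain ⟨e, he⟩ : ∃ e : Fin #M ≃ M, Antitone fun r => w (e r) :=
    ⟨(Tuple.sort fun r => OrderDual.toDual (w (M.equivFin.symm r))).trans M.equivFin.symm,
      Tuple.monotone_sort fun r => OrderDual.toDual (w (M.equivFin.symm r))⟩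
  refine ⟨fun x => if hx : x ∈ M then e.symm ⟨x, hx⟩ else 0,
    fun r => if hr : r < #M then w (e ⟨r, hr⟩) else 0, ⟨?_, ?_, ?_⟩, ?_, ?_, ?_⟩
  · intro x hx
    simp [mem_coe.1 hx]
  · intro x hx y hy hxy
    simpa [mem_coe.1 hx, mem_coe.1 hy, Fin.val_inj] using hxy
  · intro r hr
    exact ⟨e ⟨r, by simpa using hr⟩, by simp⟩
  · intro x hx
    simp [hx]
  · intro q r hqr
    dsimp only
    split_ifs with hr hq hq
    · exact he hqr
    · omega
    · exact hw _ (e _).2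
    · rfl
  · intro r hr
    simp [hr]

lemma exists_injective_forall_mem_of_lt_card {α : Type*} {m : ℕ} (t : Fin m → Finset α)
    (ht : ∀ r : Fin m, (r : ℕ) < #(t r)) :
    ∃ g : Fin m → α, Function.Injective g ∧ ∀ r, g r ∈ t r := by
  classical
  refine (all_card_le_biUnion_card_iff_exists_injective t).1 fun s => ?_
  rcases s.eq_empty_or_nonempty with rfl | hs
  · simp
  calc #s ≤ #(Iic (s.max' hs)) := card_le_card fun r hr => mem_Iic.2 (s.le_max' r hr)
    _ = s.max' hs + 1 := Fin.card_Iic _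
    _ ≤ #(t (s.max' hs)) := ht _
    _ ≤ #(s.biUnion t) := card_le_card (subset_biUnion_of_mem t (s.max'_mem hs))

lemma exists_injective_pos_le {pos : κ → ι → ℕ} {m : ℕ} (owner : Fin m → κ)
    (hpos : ∀ i, Set.SurjOn (pos i) M (range m)) :
    ∃ g : Fin m → ι, Function.Injective g ∧ ∀ r, g r ∈ M ∧ pos (owner r) (g r) ≤ r := by
  have hcard : ∀ r : Fin m, (r : ℕ) < #{x ∈ M | pos (owner r) x ≤ r} := fun r => by
    have hsurj : Set.SurjOn (pos (owner r)) ({x ∈ M | pos (owner r) x ≤ r} : Finset ι)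
        (range (r + 1)) := by
      intro q hq
      have hqr : q ≤ r := by simpa [Nat.lt_succ_iff] using hq
      obtain ⟨x, hx, rfl⟩ := hpos (owner r) (mem_coe.2 (mem_range.2 (hqr.trans_lt r.isLt)))
      exact ⟨x, by simpa [hqr] using hx, rfl⟩
    simpa using card_le_card_of_surjOn _ hsurj
  simpa only [mem_filter] using exists_injective_forall_mem_of_lt_card _ hcard

lemma CanSatisfy.of_isRanking [DecidableEq κ] {w : κ → ι → ℝ} {pos : κ → ι → ℕ} {f : κ → ℕ → ℝ}
    {τ : κ → ℝ} {R : Finset κ} {K : ℕ} (hrank : ∀ i, IsRanking (w i) M (pos i) (f i))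
    (h : CanSatisfy f τ R (range K)) : CanSatisfy w τ R M := by
  classical
  obtain ⟨a, ha⟩ := h
  let owner : Fin #M → κ := fun r => a r
  obtain ⟨g, hginj, hg⟩ := exists_injective_pos_le owner fun i => (hrank i).bijOn.surjOn
  refine ⟨Function.extend g owner fun _ => a 0, fun i hi => (ha i hi).trans ?_⟩
  calc ∑ r ∈ range K with a r = i, f i r
      = ∑ r ∈ range K with a r = i ∧ r < #M, f i r := by
        rw [← filter_filter, sum_filter_of_ne (p := (· < #M))]
        exact fun r _ hne => lt_of_not_ge fun hle => hne ((hrank i).eq_zero r hle)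
    _ ≤ ∑ r ∈ range #M with a r = i, f i r :=
        sum_le_sum_of_subset_of_nonneg (by grind) fun r _ _ => (hrank i).nonneg r
    _ = ∑ r with owner r = i, f i r := by
        rw [sum_filter, Finset.sum_range, ← sum_filter]
    _ ≤ ∑ r with owner r = i, w i (g r) := by
        refine sum_le_sum fun r hr => ?_
        obtain rfl := (mem_filter.1 hr).2
        rw [← (hrank (owner r)).apply_pos _ (hg r).1]
        exact (hrank (owner r)).antitone (hg r).2
    _ = ∑ x ∈ ({r | owner r = i} : Finset (Fin #M)).image g, w i x := by
        rw [sum_image hginj.injOn]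
    _ ≤ ∑ x ∈ M with Function.extend g owner (fun _ => a 0) x = i, w i x := by
        refine sum_le_sum_of_subset_of_nonneg (image_subset_iff.2 fun r hr => ?_) fun x hx _ => ?_
        · simpa [hginj.extend_apply, (hg r).1] using hr
        · rw [← (hrank i).apply_pos x (mem_of_mem_filter x hx)]
          exact (hrank i).nonneg _

end Ranking

section Allocation

variable {ι : Type*} {n : ℕ} {M : Finset ι} {w : Fin n → ι → ℝ}

lemma canSatisfy_of_isTarget {τ : Fin n → ℝ} (hn : 0 < n) (hw : ∀ i, ∀ j ∈ M, 0 ≤ w i j)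
    (hτ : ∀ i, IsTarget n (w i) M (τ i)) : CanSatisfy w τ univ M := by
  have : Nonempty (Fin n) := ⟨⟨0, hn⟩⟩
  choose pos f hrank using fun i => exists_isRanking (hw i)
  refine .of_isRanking (K := #M + 2 * n) hrank ?_
  rw [range_eq_Ico]
  refine canSatisfy_Ico_of_isTarget (fun i => (hrank i).antitone) (fun i => (hrank i).nonneg)
    (n := n) (by omega) (fun i _ => (hτ i).map (hrank i).bijOn.injOn ?_ (hrank i).apply_pos
      fun r _ => (hrank i).nonneg r) (by simp)
  exact (hrank i).bijOn.mapsTo.mono_right (by simp)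

lemma canSatisfy_aps_of_le_two (hn : 0 < n) (hn₂ : n ≤ 2) (hw : ∀ i, ∀ j ∈ M, 0 ≤ w i j) :
    CanSatisfy w (fun i => APS (1 / n) (fun S => ∑ j ∈ S, w i j) M) univ M := by
  classical
  have hguar : ∀ i, IsAnyPriceGuarantee (1 / n) (w i) M _ := fun i =>
    isAnyPriceGuarantee_aps (by positivity) (hw i)
  interval_cases n
  · refine .of_erase (i := 0) subset_rfl (hw 0) ?_ (canSatisfy_empty w _ _)
    simpa using (hguar 0).le_mul_sum (hw 0)
  · exact canSatisfy_pair_of_guarantee (i := 0) (j := 1) hw (hguar 0) (hguar 1)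

end Allocation

/-- For `n` agents with additive valuations and equal entitlements `1/n`, there is an
allocation giving every agent at least the minimum of 3/4 of her AnyPrice share and
2n/(3n-1) of her truncated proportional share; in particular, at least a 2n/(3n-1)
fraction of her AnyPrice share. -/
theorem aps_equal_entitlements_allocation {ι : Type*} [DecidableEq ι] (n : ℕ) (hn : 0 < n)
    (M : Finset ι) (w : Fin n → ι → ℝ)
    (hw : ∀ i, ∀ j ∈ M, 0 ≤ w i j) :
    ∃ A : Fin n → Finset ι, IsPartition M A ∧
      ∀ i, (min ((3 / 4) * APS (1 / (n : ℝ)) (fun S => ∑ j ∈ S, w i j) M)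
            ((2 * (n : ℝ) / (3 * (n : ℝ) - 1)) * TPS (1 / (n : ℝ)) (w i) M)
          ≤ ∑ j ∈ A i, w i j) ∧
        (2 * (n : ℝ) / (3 * (n : ℝ) - 1)) * APS (1 / (n : ℝ)) (fun S => ∑ j ∈ S, w i j) M
          ≤ ∑ j ∈ A i, w i j := by
  rcases le_or_gt n 2 with hn₂ | hn₃
  · obtain ⟨A, hA, hval⟩ := (canSatisfy_aps_of_le_two hn hn₂ hw).exists_isPartition
    have hn₁ : (1 : ℝ) ≤ n := by exact_mod_cast hn
    have hratio : 2 * (n : ℝ) / (3 * n - 1) ≤ 1 := by rw [div_le_one] <;> linarith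
    have haps : ∀ i, 0 ≤ APS (1 / (n : ℝ)) (fun S => ∑ j ∈ S, w i j) M := fun i =>
      aps_nonneg fun S hS => sum_nonneg fun j hj => hw i j (hS hj)
    exact ⟨A, hA, fun i =>
      ⟨(min_le_left _ _).trans ((mul_le_of_le_one_left (haps i) (by norm_num)).trans (hval i)),
        (mul_le_of_le_one_left (haps i) hratio).trans (hval i)⟩⟩
  · obtain ⟨A, hA, hval⟩ :=
      (canSatisfy_of_isTarget hn hw fun i => isTarget_min_aps_tps n (hw i)).exists_isPartition
    exact ⟨A, hA, fun i => ⟨hval i, (mul_aps_le_min_aps_tps hn₃ (hw i)).trans (hval i)⟩⟩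
end

section
/- The two definitions of the AnyPrice share coincide: for every monotone, normalized, nonnegative valuation v over a finite set M of indivisible goods and every entitlement b with 0 < b ≤ 1, the minimum over all price vectors p : M → ℝ_{≥0} with Σ_{j∈M} p_j = 1 of max{ v(S) : S ⊆ M, Σ_{j∈S} p_j ≤ b } equals the maximum value z ≥ 0 for which there exist weights λ_T ≥ 0 for all T ⊆ M with Σ_T λ_T = 1, λ_T = 0 for every T with v(T) < z, and Σ_{T : j∈T} λ_T ≤ b for every item j ∈ M. -/
open Finset

/-- The weight-based (dual) definition of the AnyPrice share: the maximum `z ≥ 0`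
admitting weights on subsets of `M` summing to 1, supported only on sets of value at
least `z`, covering every item with total weight at most `b`. -/
noncomputable def APSweights {ι : Type*} [DecidableEq ι] (b : ℝ) (v : Finset ι → ℝ) (M : Finset ι) : ℝ :=
  sSup {z : ℝ | 0 ≤ z ∧ ∃ lam : Finset ι → ℝ, (∀ T, 0 ≤ lam T) ∧
    (∑ T ∈ M.powerset, lam T) = 1 ∧
    (∀ T ∈ M.powerset, v T < z → lam T = 0) ∧
    ∀ j ∈ M, (∑ T ∈ M.powerset.filter (fun T => j ∈ T), lam T) ≤ b}

/-!
Only the bundles of value at least `z` matter for either definition at level `z`. In the zero-sum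
game where one player picks such a bundle, the other picks an item, and the first pays `1` if the
item lies in the bundle, a mixed strategy of the first player is a weighting of bundles and one of
the second is a price vector. By the minimax theorem, some weighting covers every item with weight
at most `b` exactly when every price vector leaves some bundle of value at least `z` affordable,
so both shares are the largest such `z`.
-/

section MatrixGame

open scoped Matrix

variable {m n : Type*} [Fintype m] [Fintype n]

theorem dotProduct_le_of_mem_stdSimplex {𝕜 : Type*} [Semiring 𝕜] [PartialOrder 𝕜]
    [IsOrderedRing 𝕜] {u y : n → 𝕜} {b : 𝕜} (hy : y ∈ stdSimplex 𝕜 n) (hu : ∀ j, u j ≤ b) :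
    u ⬝ᵥ y ≤ b :=
  calc u ⬝ᵥ y ≤ (fun _ ↦ b) ⬝ᵥ y := dotProduct_le_dotProduct_of_nonneg_right hu hy.1
    _ = b := by simp only [dotProduct, ← mul_sum, hy.2, mul_one]

theorem exists_le_dotProduct_of_mem_stdSimplex {𝕜 : Type*} [Ring 𝕜] [LinearOrder 𝕜]
    [IsStrictOrderedRing 𝕜] {x : m → 𝕜} (hx : x ∈ stdSimplex 𝕜 m) (u : m → 𝕜) :
    ∃ i, u i ≤ x ⬝ᵥ u := by
  by_contra! hlt
  have hpos : 0 < x ⬝ᵥ fun i ↦ u i - x ⬝ᵥ u := by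
    obtain ⟨i, -, hi⟩ := exists_ne_zero_of_sum_ne_zero (hx.2.trans_ne one_ne_zero)
    refine sum_pos' (fun k _ ↦ mul_nonneg (hx.1 k) (sub_nonneg.2 (hlt k).le)) ⟨i, mem_univ i, ?_⟩
    exact mul_pos ((hx.1 i).lt_of_ne' hi) (sub_pos.2 (hlt i))
  simp [dotProduct, mul_sub, ← sum_mul, hx.2] at hpos

theorem exists_isSaddlePointOn_stdSimplex [Nonempty m] [Nonempty n] (A : Matrix m n ℝ) :
    ∃ x ∈ stdSimplex ℝ m, ∃ y ∈ stdSimplex ℝ n,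
      IsSaddlePointOn (stdSimplex ℝ m) (stdSimplex ℝ n) (fun x y ↦ x ⬝ᵥ A *ᵥ y) x y := by
  classical
  let payoff : (m → ℝ) →ₗ[ℝ] (n → ℝ) →ₗ[ℝ] ℝ := Matrix.toLinearMap₂' ℝ A
  have hpayoff : (fun x y ↦ x ⬝ᵥ A *ᵥ y) = fun x y ↦ payoff x y := by
    ext x y
    exact (Matrix.toLinearMap₂'_apply' A x y).symm
  rw [hpayoff]
  exact Sion.exists_isSaddlePointOn
    ⟨_, single_mem_stdSimplex ℝ (Classical.arbitrary m)⟩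
    (convex_stdSimplex ℝ m) (isCompact_stdSimplex ℝ m)
    (fun y _ ↦ (payoff.flip y).continuous_of_finiteDimensional.lowerSemicontinuous
      |>.lowerSemicontinuousOn _)
    (fun y _ ↦ ((payoff.flip y).convexOn (convex_stdSimplex ℝ m)).quasiconvexOn)
    (convex_stdSimplex ℝ n)
    ⟨_, single_mem_stdSimplex ℝ (Classical.arbitrary n)⟩ (isCompact_stdSimplex ℝ n)
    (fun x _ ↦ (payoff x).continuous_of_finiteDimensional.upperSemicontinuous
      |>.upperSemicontinuousOn _)
    (fun x _ ↦ ((payoff x).concaveOn (convex_stdSimplex ℝ n)).quasiconcaveOn)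

theorem exists_vecMul_le_iff_forall_exists_mulVec_le [Nonempty n] (A : Matrix m n ℝ) (b : ℝ) :
    (∃ x ∈ stdSimplex ℝ m, ∀ j, (x ᵥ* A) j ≤ b) ↔
      ∀ y ∈ stdSimplex ℝ n, ∃ i, (A *ᵥ y) i ≤ b := by
  classical
  constructor
  · rintro ⟨x, hx, hxb⟩ y hy
    obtain ⟨i, hi⟩ := exists_le_dotProduct_of_mem_stdSimplex hx (A *ᵥ y)
    refine ⟨i, hi.trans ?_⟩
    rw [Matrix.dotProduct_mulVec]
    exact dotProduct_le_of_mem_stdSimplex hy hxb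
  · intro h
    have : Nonempty m := (h _ (single_mem_stdSimplex ℝ (Classical.arbitrary n))).nonempty
    obtain ⟨x, hx, y, hy, hxy⟩ := exists_isSaddlePointOn_stdSimplex A
    obtain ⟨i, hi⟩ := h y hy
    refine ⟨x, hx, fun j ↦ ?_⟩
    calc (x ᵥ* A) j = x ⬝ᵥ A *ᵥ Pi.single j 1 := by
          rw [Matrix.dotProduct_mulVec, dotProduct_single_one]
      _ ≤ Pi.single i 1 ⬝ᵥ A *ᵥ y :=
          hxy _ (single_mem_stdSimplex ℝ i) _ (single_mem_stdSimplex ℝ j)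
      _ = (A *ᵥ y) i := single_one_dotProduct i _
      _ ≤ b := hi

end MatrixGame

section Restrict

variable {α : Type*} {s : Finset α}

theorem restrict_mem_stdSimplex_iff {𝕜 : Type*} [Semiring 𝕜] [PartialOrder 𝕜] {x : α → 𝕜} :
    s.restrict x ∈ stdSimplex 𝕜 s ↔ (∀ i ∈ s, 0 ≤ x i) ∧ ∑ i ∈ s, x i = 1 := by
  simp only [stdSimplex, Set.mem_ofPred_eq, restrict, Subtype.forall, sum_coe_sort s x]

theorem exists_restrict_eq_and_eq_zero_of_notMem {β : Type*} [Zero β] (x : s → β) :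
    ∃ y : α → β, s.restrict y = x ∧ ∀ i ∉ s, y i = 0 := by
  classical
  exact ⟨fun i ↦ if h : i ∈ s then x ⟨i, h⟩ else 0, by ext i; simp, fun i hi ↦ dif_neg hi⟩

end Restrict

section AnyPriceShare

variable {ι : Type*} {M : Finset ι} {v : Finset ι → ℝ} {b z : ℝ}

/-- `p` is a price vector on `M`: the prices of the items of `M` are nonnegative and sum to `1`.
The values of `p` outside `M` are irrelevant. -/
def IsPriceVector (M : Finset ι) (p : ι → ℝ) : Prop :=
  (∀ j ∈ M, 0 ≤ p j) ∧ ∑ j ∈ M, p j = 1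

/-- The best value of a bundle affordable at prices `p` with budget `b`. -/
noncomputable def bestAffordableValue (b : ℝ) (v : Finset ι → ℝ) (M : Finset ι) (p : ι → ℝ) : ℝ :=
  sSup {u : ℝ | ∃ S, S ⊆ M ∧ ∑ j ∈ S, p j ≤ b ∧ u = v S}

/-- `lam` is a feasible weighting at level `z` in the weight-based AnyPrice share. As in
`APSweights`, its values on sets outside `M` only have to be nonnegative. -/
def IsAPSWeighting [DecidableEq ι] (b : ℝ) (v : Finset ι → ℝ) (M : Finset ι) (z : ℝ)
    (lam : Finset ι → ℝ) : Prop :=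
  (∀ T, 0 ≤ lam T) ∧ ∑ T ∈ M.powerset, lam T = 1 ∧
    (∀ T ∈ M.powerset, v T < z → lam T = 0) ∧ ∀ j ∈ M, ∑ T ∈ M.powerset with j ∈ T, lam T ≤ b

/-- The bundles of value at least `z`, which are those that may carry weight at level `z`. -/
noncomputable def bundlesOfValueGE (v : Finset ι → ℝ) (M : Finset ι) (z : ℝ) :
    Finset (Finset ι) :=
  {T ∈ M.powerset | z ≤ v T}

theorem mem_bundlesOfValueGE {T : Finset ι} : T ∈ bundlesOfValueGE v M z ↔ T ⊆ M ∧ z ≤ v T := by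
  rw [bundlesOfValueGE, mem_filter, mem_powerset]

theorem sum_bundlesOfValueGE_eq_sum_powerset {w : Finset ι → ℝ}
    (hw : ∀ T ∈ M.powerset, v T < z → w T = 0) :
    ∑ T ∈ bundlesOfValueGE v M z, w T = ∑ T ∈ M.powerset, w T :=
  sum_filter_of_ne fun T hT hne ↦ not_lt.1 (mt (hw T hT) hne)

theorem le_bestAffordableValue_iff (hb : 0 ≤ b) {p : ι → ℝ} :
    z ≤ bestAffordableValue b v M p ↔ ∃ S ⊆ M, ∑ j ∈ S, p j ≤ b ∧ z ≤ v S := by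
  have hfin : {u : ℝ | ∃ S, S ⊆ M ∧ ∑ j ∈ S, p j ≤ b ∧ u = v S}.Finite := by
    refine (M.powerset.finite_toSet.image v).subset ?_
    rintro _ ⟨S, hSM, -, rfl⟩
    exact ⟨S, mem_powerset.2 hSM, rfl⟩
  constructor
  · intro hz
    have hne : {u : ℝ | ∃ S, S ⊆ M ∧ ∑ j ∈ S, p j ≤ b ∧ u = v S}.Nonempty :=
      ⟨v ∅, ∅, M.empty_subset, by rwa [sum_empty], rfl⟩
    obtain ⟨S, hSM, hSb, hS⟩ := hne.csSup_mem hfin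
    exact ⟨S, hSM, hSb, hz.trans_eq hS⟩
  · rintro ⟨S, hSM, hSb, hzS⟩
    exact hzS.trans (le_csSup hfin.bddAbove ⟨S, hSM, hSb, rfl⟩)

theorem APS_eq_sInf_image (b : ℝ) (v : Finset ι → ℝ) (M : Finset ι) :
    APS b v M = sInf (bestAffordableValue b v M '' {p | IsPriceVector M p}) := by
  simp only [APS, bestAffordableValue, IsPriceVector, Set.image, Set.mem_ofPred_eq, and_assoc,
    eq_comm]

theorem exists_isPriceVector (hM : M.Nonempty) : ∃ p, IsPriceVector M p := by
  classical
  obtain ⟨j, hj⟩ := hM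
  obtain ⟨p, hp, -⟩ := exists_restrict_eq_and_eq_zero_of_notMem (Pi.single (⟨j, hj⟩ : M) (1 : ℝ))
  exact ⟨p, restrict_mem_stdSimplex_iff.1 (hp ▸ single_mem_stdSimplex ℝ _)⟩

theorem le_APS_iff (hM : M.Nonempty) (hb : 0 ≤ b) :
    z ≤ APS b v M ↔ ∀ p, IsPriceVector M p → ∃ S ⊆ M, ∑ j ∈ S, p j ≤ b ∧ z ≤ v S := by
  have hbdd : BddBelow (bestAffordableValue b v M '' {p | IsPriceVector M p}) := by
    refine ⟨v ∅, Set.forall_mem_image.2 fun p _ ↦ ?_⟩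
    exact (le_bestAffordableValue_iff hb).2 ⟨∅, M.empty_subset, by rwa [sum_empty], le_rfl⟩
  rw [APS_eq_sInf_image, le_csInf_iff hbdd (Set.Nonempty.image _ (exists_isPriceVector hM)),
    Set.forall_mem_image]
  exact forall₂_congr fun _ _ ↦ le_bestAffordableValue_iff hb

section Duality

open scoped Matrix

variable [DecidableEq ι]

/-- The incidence matrix of a family `F` of bundles, with a row for each bundle and a column for
each item of `M`. -/
def bundleIncidence (F : Finset (Finset ι)) (M : Finset ι) : Matrix F M ℝ :=
  .of fun T j ↦ if j.1 ∈ T.1 then 1 else 0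

theorem bundleIncidence_mulVec_restrict {F : Finset (Finset ι)} (T : F) (hT : T.1 ⊆ M)
    (p : ι → ℝ) : (bundleIncidence F M *ᵥ M.restrict p) T = ∑ j ∈ T.1, p j := by
  simp only [Matrix.mulVec, dotProduct, bundleIncidence, Matrix.of_apply, restrict, ite_mul,
    one_mul, zero_mul]
  rw [sum_coe_sort M fun j ↦ if j ∈ T.1 then p j else 0, sum_ite_mem, inter_eq_right.2 hT]

theorem restrict_vecMul_bundleIncidence (F : Finset (Finset ι)) (lam : Finset ι → ℝ) (j : M) :
    (F.restrict lam ᵥ* bundleIncidence F M) j = ∑ T ∈ F with j.1 ∈ T, lam T := by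
  simp only [Matrix.vecMul, dotProduct, bundleIncidence, Matrix.of_apply, restrict, mul_ite,
    mul_one, mul_zero]
  rw [sum_coe_sort F fun T ↦ if j.1 ∈ T then lam T else 0, sum_filter]

theorem sum_filter_bundlesOfValueGE_eq_sum_filter_powerset {lam : Finset ι → ℝ}
    (hlam : ∀ T ∈ M.powerset, v T < z → lam T = 0) (j : ι) :
    ∑ T ∈ bundlesOfValueGE v M z with j ∈ T, lam T = ∑ T ∈ M.powerset with j ∈ T, lam T := by
  simp only [sum_filter]
  exact sum_bundlesOfValueGE_eq_sum_powerset fun T hT hz ↦ by rw [hlam T hT hz, ite_self]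

theorem exists_isAPSWeighting_iff_exists_vecMul_le :
    (∃ lam, IsAPSWeighting b v M z lam) ↔
      ∃ x ∈ stdSimplex ℝ (bundlesOfValueGE v M z),
        ∀ j, (x ᵥ* bundleIncidence (bundlesOfValueGE v M z) M) j ≤ b := by
  constructor
  · rintro ⟨lam, hnonneg, hsum, hsupp, hcover⟩
    refine ⟨(bundlesOfValueGE v M z).restrict lam, restrict_mem_stdSimplex_iff.2
      ⟨fun T _ ↦ hnonneg T, (sum_bundlesOfValueGE_eq_sum_powerset hsupp).trans hsum⟩, fun j ↦ ?_⟩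
    rw [restrict_vecMul_bundleIncidence,
      sum_filter_bundlesOfValueGE_eq_sum_filter_powerset hsupp]
    exact hcover j j.2
  · rintro ⟨x, hx, hcover⟩
    obtain ⟨lam, rfl, hzero⟩ := exists_restrict_eq_and_eq_zero_of_notMem x
    obtain ⟨hnonneg, hsum⟩ := restrict_mem_stdSimplex_iff.1 hx
    have hsupp : ∀ T ∈ M.powerset, v T < z → lam T = 0 := fun T _ hT ↦
      hzero T fun hmem ↦ hT.not_ge (mem_bundlesOfValueGE.1 hmem).2
    refine ⟨lam, fun T ↦ ?_, (sum_bundlesOfValueGE_eq_sum_powerset hsupp).symm.trans hsum, hsupp,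
      fun j hj ↦ ?_⟩
    · by_cases hT : T ∈ bundlesOfValueGE v M z
      exacts [hnonneg T hT, (hzero T hT).ge]
    · rw [← sum_filter_bundlesOfValueGE_eq_sum_filter_powerset hsupp,
        ← restrict_vecMul_bundleIncidence _ lam ⟨j, hj⟩]
      exact hcover ⟨j, hj⟩

theorem forall_exists_mulVec_le_iff_forall_isPriceVector :
    (∀ y ∈ stdSimplex ℝ M, ∃ T, (bundleIncidence (bundlesOfValueGE v M z) M *ᵥ y) T ≤ b) ↔
      ∀ p, IsPriceVector M p → ∃ S ⊆ M, ∑ j ∈ S, p j ≤ b ∧ z ≤ v S := by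
  have hsurj : Function.Surjective (M.restrict (π := fun _ ↦ ℝ)) := fun y ↦
    (exists_restrict_eq_and_eq_zero_of_notMem y).imp fun _ ↦ And.left
  rw [hsurj.forall]
  refine forall_congr' fun p ↦ imp_congr restrict_mem_stdSimplex_iff ?_
  constructor
  · rintro ⟨⟨T, hT⟩, hTb⟩
    obtain ⟨hTM, hzT⟩ := mem_bundlesOfValueGE.1 hT
    exact ⟨T, hTM, by rwa [bundleIncidence_mulVec_restrict _ hTM] at hTb, hzT⟩
  · rintro ⟨S, hSM, hSb, hzS⟩
    refine ⟨⟨S, mem_bundlesOfValueGE.2 ⟨hSM, hzS⟩⟩, ?_⟩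
    rwa [bundleIncidence_mulVec_restrict _ hSM]

theorem exists_isAPSWeighting_iff_le_APS (hM : M.Nonempty) (hb : 0 ≤ b) :
    (∃ lam, IsAPSWeighting b v M z lam) ↔ z ≤ APS b v M := by
  have : Nonempty M := hM.to_subtype
  rw [exists_isAPSWeighting_iff_exists_vecMul_le, exists_vecMul_le_iff_forall_exists_mulVec_le,
    forall_exists_mulVec_le_iff_forall_isPriceVector, le_APS_iff hM hb]

end Duality

-- The empty set carries no price vector, so the infimum defining `APS` is the junk value `sInf ∅`.
theorem APS_empty (b : ℝ) (v : Finset ι → ℝ) : APS b v ∅ = 0 := by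
  simp [APS]

theorem exists_isAPSWeighting_empty_iff [DecidableEq ι] :
    (∃ lam, IsAPSWeighting b v ∅ z lam) ↔ z ≤ v ∅ := by
  simp only [IsAPSWeighting, powerset_empty, sum_singleton, mem_singleton, forall_eq,
    notMem_empty, IsEmpty.forall_iff, implies_true, and_true]
  constructor
  · rintro ⟨lam, -, hsum, hsupp⟩
    by_contra! hz
    exact one_ne_zero (hsum.symm.trans (hsupp hz))
  · exact fun hz ↦ ⟨fun _ ↦ 1, fun _ ↦ zero_le_one, rfl, fun hlt ↦ absurd hz hlt.not_ge⟩

theorem aps_price_eq_weights_general [DecidableEq ι] (M : Finset ι) (v : Finset ι → ℝ) (b : ℝ)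
    (hb : 0 ≤ b) (hnorm : v ∅ = 0) : APS b v M = APSweights b v M := by
  suffices h : 0 ≤ APS b v M ∧ ∀ z, (∃ lam, IsAPSWeighting b v M z lam) ↔ z ≤ APS b v M by
    have hIcc : APSweights b v M = sSup (Set.Icc 0 (APS b v M)) :=
      congrArg sSup (Set.ext fun z ↦ and_congr_right' (h.2 z))
    rw [hIcc, csSup_Icc h.1]
  rcases M.eq_empty_or_nonempty with rfl | hM
  · rw [APS_empty]
    exact ⟨le_rfl, fun z ↦ hnorm ▸ exists_isAPSWeighting_empty_iff⟩
  · refine ⟨(le_APS_iff hM hb).2 fun p _ ↦ ?_, fun z ↦ exists_isAPSWeighting_iff_le_APS hM hb⟩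
    exact ⟨∅, M.empty_subset, by rwa [sum_empty], hnorm.ge⟩

end AnyPriceShare

/-- The price-based and weight-based definitions of the AnyPrice share coincide for
every monotone, normalized, nonnegative valuation and entitlement `0 < b ≤ 1`. -/
theorem aps_price_eq_weights {ι : Type*} [DecidableEq ι] (M : Finset ι)
    (v : Finset ι → ℝ) (b : ℝ) (hb0 : 0 < b) (hb1 : b ≤ 1)
    (hnorm : v ∅ = 0)
    (hmono : ∀ S T : Finset ι, S ⊆ T → T ⊆ M → v S ≤ v T)
    (hnonneg : ∀ S : Finset ι, S ⊆ M → 0 ≤ v S) :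
    APS b v M = APSweights b v M :=
  aps_price_eq_weights_general M v b hb0.le hnorm
end

section
/- For every monotone, normalized, nonnegative valuation v over a finite set M of indivisible goods and every entitlement b with 0 < b ≤ 1, the AnyPrice share is at least the pessimistic share: APS(b, v, M) ≥ Pessimistic(b, v, M). -/
open Finset

/-- The pessimistic share: the maximum ℓ-out-of-d share over all positive integers
`l, d` with `l / d ≤ b`. -/
noncomputable def Pessimistic {ι : Type*} [DecidableEq ι] (b : ℝ) (v : Finset ι → ℝ) (M : Finset ι) : ℝ :=
  sSup {t : ℝ | ∃ l d : ℕ, 0 < l ∧ 0 < d ∧ (l : ℝ) / d ≤ b ∧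
    ∃ P : Fin d → Finset ι, IsPartition M P ∧
      ∀ J : Finset (Fin d), J.card = l → t ≤ v (J.biUnion P)}

/-! Fix prices summing to `1` and a partition of the goods into `d` parts with `l / d ≤ b`. On
average, `l` of the parts cost a fraction `l / d` of the total price, so some `l` of them are
together affordable with budget `b`, and their union is worth at least the guarantee of the
partition. -/

section Averaging

variable {α R : Type*} [AddCommMonoid R] [LinearOrder R]

theorem exists_mem_card_nsmul_sum_erase_le [IsOrderedAddMonoid R] [DecidableEq α] {s : Finset α}
    (hs : s.Nonempty) (f : α → R) :
    ∃ x ∈ s, #s • ∑ i ∈ s.erase x, f i ≤ #(s.erase x) • ∑ i ∈ s, f i := by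
  obtain ⟨x, hx, hmax⟩ := s.exists_max_image f hs
  have hrest : ∑ i ∈ s.erase x, f i ≤ #(s.erase x) • f x :=
    sum_le_card_nsmul _ _ _ fun i hi => hmax i (mem_of_mem_erase hi)
  refine ⟨x, hx, ?_⟩
  rw [← card_erase_add_one hx, succ_nsmul, ← sum_erase_add s f hx, nsmul_add]
  gcongr

-- Discard the largest term until `l` remain: this never raises the average.
theorem exists_subset_card_eq_card_nsmul_sum_le [IsOrderedCancelAddMonoid R] {s : Finset α} {l : ℕ}
    (hl : l ≤ #s) (f : α → R) :
    ∃ t ⊆ s, #t = l ∧ #s • ∑ i ∈ t, f i ≤ l • ∑ i ∈ s, f i := by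
  classical
  induction hl using Nat.decreasingInduction with
  | self => exact ⟨s, Subset.rfl, rfl, le_rfl⟩
  | of_succ l _ ih =>
    obtain ⟨t, hts, htcard, ht⟩ := ih
    obtain ⟨x, hx, hxt⟩ := exists_mem_card_nsmul_sum_erase_le (s := t) (card_pos.1 (by omega)) f
    have hcard : #(t.erase x) = l := by rw [card_erase_of_mem hx, htcard, Nat.add_sub_cancel]
    rw [hcard, htcard] at hxt
    refine ⟨t.erase x, (erase_subset x t).trans hts, hcard,
      le_of_nsmul_le_nsmul_right l.succ_ne_zero ?_⟩
    calc (l + 1) • #s • ∑ i ∈ t.erase x, f i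
        = #s • (l + 1) • ∑ i ∈ t.erase x, f i := smul_comm ..
      _ ≤ #s • l • ∑ i ∈ t, f i := by gcongr
      _ = l • #s • ∑ i ∈ t, f i := smul_comm ..
      _ ≤ l • (l + 1) • ∑ i ∈ s, f i := by gcongr
      _ = (l + 1) • l • ∑ i ∈ s, f i := smul_comm ..

end Averaging

namespace IsPartition

variable {ι : Type*} [DecidableEq ι] {M : Finset ι} {d l : ℕ} {P : Fin d → Finset ι}

theorem ite_eq (M : Finset ι) (i₀ : Fin d) : IsPartition M fun i => if i = i₀ then M else ∅ := by
  refine ⟨fun i => ?_, fun i j hij => ?_, fun x hx => ⟨i₀, by simpa using hx⟩⟩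
  · dsimp only
    split_ifs <;> simp
  · by_cases hi : i = i₀
    · simp [show j ≠ i₀ from fun hj => hij (hi.trans hj.symm)]
    · simp [hi]

theorem biUnion_subset (hP : IsPartition M P) (J : Finset (Fin d)) : J.biUnion P ⊆ M :=
  Finset.biUnion_subset.2 fun i _ => hP.1 i

theorem biUnion_univ (hP : IsPartition M P) : univ.biUnion P = M :=
  (hP.biUnion_subset univ).antisymm fun x hx => by simpa using hP.2.2 x hx

theorem sum_biUnion {R : Type*} [AddCommMonoid R] (hP : IsPartition M P) (J : Finset (Fin d))
    (p : ι → R) : ∑ j ∈ J.biUnion P, p j = ∑ i ∈ J, ∑ j ∈ P i, p j :=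
  Finset.sum_biUnion fun i _ j _ hij => hP.2.1 i j hij

theorem exists_card_eq_nsmul_sum_biUnion_le {R : Type*} [AddCommMonoid R] [LinearOrder R]
    [IsOrderedCancelAddMonoid R] (hP : IsPartition M P) (hl : l ≤ d) (p : ι → R) :
    ∃ J : Finset (Fin d), #J = l ∧ d • ∑ j ∈ J.biUnion P, p j ≤ l • ∑ j ∈ M, p j := by
  obtain ⟨J, -, hJcard, hJ⟩ := exists_subset_card_eq_card_nsmul_sum_le
    (s := (univ : Finset (Fin d))) (by simpa using hl) fun i => ∑ j ∈ P i, p j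
  rw [card_fin, ← hP.sum_biUnion, ← hP.sum_biUnion, hP.biUnion_univ] at hJ
  exact ⟨J, hJcard, hJ⟩

theorem exists_card_eq_sum_biUnion_le {b : ℝ} (hP : IsPartition M P) (hd : 0 < d)
    (hld : (l : ℝ) / d ≤ b) (hb1 : b ≤ 1) {p : ι → ℝ} (hp : ∑ j ∈ M, p j ≤ 1) :
    ∃ J : Finset (Fin d), #J = l ∧ ∑ j ∈ J.biUnion P, p j ≤ b := by
  have hd' : (0 : ℝ) < d := mod_cast hd
  have hl : l ≤ d := mod_cast (div_le_one hd').1 (hld.trans hb1)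
  obtain ⟨J, hJcard, hJ⟩ := hP.exists_card_eq_nsmul_sum_biUnion_le hl p
  refine ⟨J, hJcard, ?_⟩
  calc ∑ j ∈ J.biUnion P, p j
      ≤ l * (∑ j ∈ M, p j) / d := by
        rw [le_div_iff₀' hd']
        simpa only [nsmul_eq_mul] using hJ
    _ ≤ l * 1 / d := by gcongr
    _ ≤ b := by rwa [mul_one]

end IsPartition

section AnyPrice

variable {ι : Type*} {M : Finset ι} {b c : ℝ} {v : Finset ι → ℝ}

-- No price vector on `∅` sums to `1`, so this is the junk value of `sInf ∅`.
theorem aps_empty : APS b v ∅ = 0 := by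
  simp [APS]

theorem le_aps (hM : M.Nonempty)
    (h : ∀ p : ι → ℝ, (∀ j ∈ M, 0 ≤ p j) → ∑ j ∈ M, p j = 1 →
      ∃ S ⊆ M, ∑ j ∈ S, p j ≤ b ∧ c ≤ v S) :
    c ≤ APS b v M := by
  classical
  obtain ⟨m, hm⟩ := hM
  refine le_csInf ⟨_, Pi.single m 1, fun j _ => ?_, by simp [hm], rfl⟩ ?_
  · exact (Pi.single_nonneg.2 zero_le_one : (0 : ι → ℝ) ≤ Pi.single m 1) j
  · rintro _ ⟨p, hp, hsum, rfl⟩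
    obtain ⟨S, hSM, hSb, hcS⟩ := h p hp hsum
    have hbdd : BddAbove {u | ∃ S, S ⊆ M ∧ ∑ j ∈ S, p j ≤ b ∧ u = v S} :=
      (M.powerset.finite_toSet.image v).bddAbove.mono <| by
        rintro _ ⟨T, hTM, -, rfl⟩
        exact ⟨T, by simpa using hTM, rfl⟩
    exact hcS.trans (le_csSup hbdd ⟨S, hSM, hSb, rfl⟩)

end AnyPrice

section Pessimistic

variable {ι : Type*} [DecidableEq ι] {M : Finset ι} {b c : ℝ} {v : Finset ι → ℝ}

theorem pessimistic_le (hb : 0 < b)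
    (h : ∀ (l d : ℕ) (t : ℝ) (P : Fin d → Finset ι), 0 < l → 0 < d → (l : ℝ) / d ≤ b →
      IsPartition M P → (∀ J : Finset (Fin d), #J = l → t ≤ v (J.biUnion P)) → t ≤ c) :
    Pessimistic b v M ≤ c := by
  refine csSup_le ?_ ?_
  · obtain ⟨n, hn⟩ := exists_nat_one_div_lt hb
    obtain ⟨t, ht⟩ := (M.powerset.finite_toSet.image v).bddBelow
    have hP := IsPartition.ite_eq M (0 : Fin (n + 1))
    refine ⟨t, 1, n + 1, one_pos, n.succ_pos, mod_cast hn.le, _, hP, fun J _ => ht ⟨_, ?_, rfl⟩⟩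
    simpa using hP.biUnion_subset J
  · rintro t ⟨l, d, hl, hd, hld, P, hP, ht⟩
    exact h l d t P hl hd hld hP ht

theorem pessimistic_empty_le (hb0 : 0 < b) (hb1 : b ≤ 1) : Pessimistic b v ∅ ≤ v ∅ := by
  refine pessimistic_le hb0 fun l d t P _ hd hld hP ht => ?_
  obtain ⟨J, hJ, -⟩ := hP.exists_card_eq_sum_biUnion_le hd hld hb1 (p := 0) (by simp)
  simpa only [subset_empty.1 (hP.biUnion_subset J)] using ht J hJ

end Pessimistic

theorem aps_ge_pessimistic_general {ι : Type*} [DecidableEq ι] {M : Finset ι} (hM : M.Nonempty)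
    (v : Finset ι → ℝ) {b : ℝ} (hb0 : 0 < b) (hb1 : b ≤ 1) :
    Pessimistic b v M ≤ APS b v M := by
  refine pessimistic_le hb0 fun l d t P _ hd hld hP ht => le_aps hM fun p _ hp => ?_
  obtain ⟨J, hJ, hJb⟩ := hP.exists_card_eq_sum_biUnion_le hd hld hb1 hp.le
  exact ⟨J.biUnion P, hP.biUnion_subset J, hJb, ht J hJ⟩

/-- For every monotone, normalized, nonnegative valuation and entitlement `0 < b ≤ 1`,
the AnyPrice share is at least the pessimistic share. -/
theorem aps_ge_pessimistic {ι : Type*} [DecidableEq ι] (M : Finset ι)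
    (v : Finset ι → ℝ) (b : ℝ) (hb0 : 0 < b) (hb1 : b ≤ 1)
    (hnorm : v ∅ = 0)
    (hmono : ∀ S T : Finset ι, S ⊆ T → T ⊆ M → v S ≤ v T)
    (hnonneg : ∀ S : Finset ι, S ⊆ M → 0 ≤ v S) :
    Pessimistic b v M ≤ APS b v M := by
  obtain rfl | hM := M.eq_empty_or_nonempty
  · exact (pessimistic_empty_le hb0 hb1).trans_eq (hnorm.trans aps_empty.symm)
  · exact aps_ge_pessimistic_general hM v hb0 hb1
end
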